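/- Every fullerene is a flag 3-polytope. -/

import Mathlib

open Set

noncomputable section

/-- The ambient space `ℝ³`. -/
abbrev E3 := EuclideanSpace ℝ (Fin 3)

/-- The cyclic successor in `Fin k`. -/
def nxt {k : ℕ} (i : Fin k) : Fin k := ⟨(i.1 + 1) % k, Nat.mod_lt _ i.pos⟩

/-- The cyclic predecessor in `Fin k`. -/
def prv {k : ℕ} (i : Fin k) : Fin k := ⟨(i.1 + (k - 1)) % k, Nat.mod_lt _ i.pos⟩

/-- A convex polytope in `ℝ³`: the convex hull of a finite set of points. -/
def IsPolytope (P : Set E3) : Prop := ∃ V : Finset E3, P = convexHull ℝ (V : Set E3)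

/-- The dimension of a subset of `ℝ³` (the dimension of its affine hull). -/
def setDim (A : Set E3) : ℕ := Module.finrank ℝ ↥(vectorSpan ℝ A)

/-- A face of a polytope: a nonempty closed convex extreme subset. -/
def IsFaceOf (F P : Set E3) : Prop :=
  F.Nonempty ∧ IsClosed F ∧ Convex ℝ F ∧ IsExtreme ℝ P F

/-- A facet: a `2`-dimensional face. -/
def IsFacetOf (F P : Set E3) : Prop := IsFaceOf F P ∧ setDim F = 2

/-- An edge: a `1`-dimensional face. -/
def IsEdgeOf (F P : Set E3) : Prop := IsFaceOf F P ∧ setDim F = 1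

/-- A vertex: a point whose singleton is a face. -/
def IsVertexOf (v : E3) (P : Set E3) : Prop := IsFaceOf {v} P

/-- The set of facets of `P`. -/
def facets (P : Set E3) : Set (Set E3) := {F | IsFacetOf F P}

/-- A simple 3-polytope: a 3-dimensional convex polytope each of whose vertices
is contained in exactly 3 facets. -/
def IsSimplePolytope3 (P : Set E3) : Prop :=
  IsPolytope P ∧ setDim P = 3 ∧
    ∀ v : E3, IsVertexOf v P → {F | IsFacetOf F P ∧ v ∈ F}.ncard = 3

/-- The number of edges of a facet `F` of `P`. -/
def facetEdges (P F : Set E3) : ℕ := {e | IsEdgeOf e P ∧ e ⊆ F}.ncard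

/-- `pVec P k` is the number of `k`-gonal facets of `P`. -/
def pVec (P : Set E3) (k : ℕ) : ℕ := {F | IsFacetOf F P ∧ facetEdges P F = k}.ncard

/-- A (mathematical) fullerene: a simple 3-polytope with all facets pentagons
and hexagons. -/
def IsFullerene (P : Set E3) : Prop :=
  IsSimplePolytope3 P ∧ ∀ F, IsFacetOf F P → facetEdges P F = 5 ∨ facetEdges P F = 6

/-- A `k`-loop in `P` (`k ≥ 2`): a cyclic sequence of facets in which
(cyclically) consecutive facets intersect in an edge; a `1`-loop is a single facet. -/
def IsLoop (P : Set E3) {k : ℕ} (L : Fin k → Set E3) : Prop :=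
  0 < k ∧ (∀ i, IsFacetOf (L i) P) ∧ (2 ≤ k → ∀ i, IsEdgeOf (L i ∩ L (nxt i)) P)

/-- A simple loop: a loop with pairwise different facets. -/
def IsSimpleLoop (P : Set E3) {k : ℕ} (L : Fin k → Set E3) : Prop :=
  IsLoop P L ∧ Function.Injective L

/-- A `k`-belt (`k ≥ 3`): a `k`-loop such that for `k = 3` the three facets have empty
total intersection, and for `k ≥ 4` two facets intersect iff they are cyclically successive. -/
def IsBelt (P : Set E3) {k : ℕ} (L : Fin k → Set E3) : Prop :=
  3 ≤ k ∧ IsLoop P L ∧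
    (k = 3 → ∀ i, L i ∩ L (nxt i) ∩ L (nxt (nxt i)) = ∅) ∧
    (4 ≤ k → ∀ p q, p ≠ q → ((L p ∩ L q).Nonempty ↔ q = nxt p ∨ p = nxt q))

/-- A flag 3-polytope: a simple 3-polytope different from the tetrahedron
(i.e. not having exactly 4 facets) without 3-belts. -/
def IsFlag3Polytope (P : Set E3) : Prop :=
  IsSimplePolytope3 P ∧ (facets P).ncard ≠ 4 ∧ ∀ B : Fin 3 → Set E3, ¬ IsBelt P B

/-- `γ` is the simple edge-cycle of `P` traced by the cyclically ordered distinct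
vertices `v 0, …, v (n-1)` (`n ≥ 3`), consecutive ones joined by edges of `P`. -/
def IsSimpleEdgeCycleVia (P γ : Set E3) {n : ℕ} (v : Fin n → E3) : Prop :=
  3 ≤ n ∧ Function.Injective v ∧ (∀ i, IsVertexOf (v i) P) ∧
    (∀ i, IsEdgeOf (segment ℝ (v i) (v (nxt i))) P) ∧
    γ = ⋃ i, segment ℝ (v i) (v (nxt i))

/-- A simple edge-cycle in the graph of `P`. -/
def IsSimpleEdgeCycle (P γ : Set E3) : Prop :=
  ∃ (n : ℕ) (v : Fin n → E3), IsSimpleEdgeCycleVia P γ v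

/-- `C` is a connected component of the set `A`. -/
def IsCompOf (C A : Set E3) : Prop := ∃ x ∈ A, C = connectedComponentIn A x

/-- The loop `L` is obtained by walking round the simple edge-cycle `γ` inside the
connected component `C` of `∂P ∖ γ`: the facets of `L` lie on the side `C`, and the
edges of `γ`, in cyclic order, lie in the facets of `L` in cyclic order (the loop
index advancing exactly when the facet changes, and making exactly one turn). -/
def WalksRound (P γ C : Set E3) {k : ℕ} (L : Fin k → Set E3) : Prop :=
  IsLoop P L ∧ (∀ i, intrinsicInterior ℝ (L i) ⊆ C) ∧
    ∃ (n : ℕ) (v : Fin n → E3) (φ : Fin n → Fin k),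
      IsSimpleEdgeCycleVia P γ v ∧
      (∀ i, segment ℝ (v i) (v (nxt i)) ⊆ L (φ i)) ∧
      (∀ i, φ (nxt i) = φ i ∨ φ (nxt i) = nxt (φ i)) ∧
      Function.Surjective φ ∧
      (2 ≤ k → (Finset.univ.filter (fun i : Fin n => φ (nxt i) ≠ φ i)).card = k)

/-- Two loops border each other: they are obtained by walking round the same simple
edge-cycle `γ` in the two different connected components of `∂P ∖ γ`. -/
def Borders (P : Set E3) {k₁ k₂ : ℕ} (L₁ : Fin k₁ → Set E3) (L₂ : Fin k₂ → Set E3) : Prop :=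
  ∃ γ C₁ C₂ : Set E3, IsCompOf C₁ (frontier P \ γ) ∧ IsCompOf C₂ (frontier P \ γ) ∧
    C₁ ≠ C₂ ∧ WalksRound P γ C₁ L₁ ∧ WalksRound P γ C₂ L₂

/-- A loop surrounds the facet `F` if it borders the `1`-loop `(F)`. -/
def Surrounds (P : Set E3) {k : ℕ} (L : Fin k → Set E3) (F : Set E3) : Prop :=
  IsFacetOf F P ∧ Borders P L (fun _ : Fin 1 => F)

/-- The number of edges of `P` lying in the facet `F` and in the set `γ`. -/
def edgesInCommon (P F γ : Set E3) : ℕ := {e | IsEdgeOf e P ∧ e ⊆ F ∧ e ⊆ γ}.ncard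
/-- A simple 3-polytope all of whose facets are pentagons and hexagons except for
at most one exceptional facet, which is a quadrangle or a heptagon. -/
def IsAlmostFullerene (P : Set E3) : Prop :=
  IsSimplePolytope3 P ∧
    (∀ F, IsFacetOf F P → facetEdges P F ∈ ({4, 5, 6, 7} : Set ℕ)) ∧
    {F | IsFacetOf F P ∧ (facetEdges P F = 4 ∨ facetEdges P F = 7)}.ncard ≤ 1

/-- The (combinatorial) dodecahedron: a simple 3-polytope with all facets pentagons. -/
def IsDodecahedron (P : Set E3) : Prop :=
  IsSimplePolytope3 P ∧ ∀ F, IsFacetOf F P → facetEdges P F = 5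

/-- `e` and `e'` are opposite edges of the hexagonal facet `H`: they are disjoint and no
edge of `H` meets both of them. -/
def OppositeEdges (P H e e' : Set E3) : Prop :=
  IsEdgeOf e P ∧ IsEdgeOf e' P ∧ e ⊆ H ∧ e' ⊆ H ∧ e ∩ e' = ∅ ∧
    ∀ e'', IsEdgeOf e'' P → e'' ⊆ H → (e'' ∩ e).Nonempty → e'' ≠ e → e'' ∩ e' = ∅

/-- A cap: a pentagonal facet `F₀` together with a surrounding 5-belt of pentagons. -/
def IsCapOf (P F₀ : Set E3) (L : Fin 5 → Set E3) : Prop :=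
  IsFacetOf F₀ P ∧ facetEdges P F₀ = 5 ∧ (∀ i, facetEdges P (L i) = 5) ∧
    IsBelt P L ∧ Surrounds P L F₀

/-- The number of 5-belts of `P` (counted as sets of facets). -/
def fiveBeltCount (P : Set E3) : ℕ :=
  {S : Set (Set E3) | ∃ B : Fin 5 → Set E3, IsBelt P B ∧ S = Set.range B}.ncard

/-- The structure of the `k`-th fullerene of Family I: two caps separated by `k`
hexagonal 5-belts, each bordering the next (for `k = 0` the caps border each other,
giving the dodecahedron). -/
def FamilyI (P : Set E3) (k : ℕ) : Prop :=
  ∃ (F₀ F₀' : Set E3) (L L' : Fin 5 → Set E3) (B : ℕ → Fin 5 → Set E3),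
    IsCapOf P F₀ L ∧ IsCapOf P F₀' L' ∧
    (∀ i < k, IsBelt P (B i) ∧ ∀ j, facetEdges P (B i j) = 6) ∧
    (∀ i, i + 1 < k → Borders P (B i) (B (i + 1))) ∧
    (0 < k → Borders P L (B 0) ∧ Borders P (B (k - 1)) L') ∧
    (k = 0 → Borders P L L') ∧
    facets P = {F₀, F₀'} ∪ Set.range L ∪ Set.range L' ∪ ⋃ i ∈ Set.Iio k, Set.range (B i)

/-- `P` is obtained from `Q` by an `(s,k;t₀,t₁)`-truncation with new edge `Enew`:
`P` is cut off from `Q` by a halfspace `{f ≤ c}` whose boundary plane crosses exactly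
two edges `E₀ ≠ E₁` of a `k`-gonal facet `F` of `Q`, cutting off exactly `s` vertices,
all belonging to `F`; `G₀` and `G₁` are the facets meeting `F` along `E₀` and `E₁`, and
they are `t₀`- and `t₁`-gons; `Enew` is the new edge dividing `F`. -/
def IsTruncation (s k t₀ t₁ : ℕ) (Q P Enew : Set E3) : Prop :=
  IsSimplePolytope3 Q ∧ IsSimplePolytope3 P ∧
    ∃ (F E₀ E₁ G₀ G₁ : Set E3) (f : E3 →ₗ[ℝ] ℝ) (c : ℝ),
      IsFacetOf F Q ∧ facetEdges Q F = k ∧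
      IsEdgeOf E₀ Q ∧ IsEdgeOf E₁ Q ∧ E₀ ≠ E₁ ∧ E₀ ⊆ F ∧ E₁ ⊆ F ∧
      IsFacetOf G₀ Q ∧ IsFacetOf G₁ Q ∧ G₀ ≠ F ∧ G₁ ≠ F ∧ E₀ ⊆ G₀ ∧ E₁ ⊆ G₁ ∧
      facetEdges Q G₀ = t₀ ∧ facetEdges Q G₁ = t₁ ∧
      P = Q ∩ {x | f x ≤ c} ∧
      (∀ e, IsEdgeOf e Q → (∃ x ∈ e, c < f x) → (∃ x ∈ e, f x < c) → e = E₀ ∨ e = E₁) ∧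
      (∃ x ∈ E₀, c < f x) ∧ (∃ x ∈ E₀, f x < c) ∧
      (∃ x ∈ E₁, c < f x) ∧ (∃ x ∈ E₁, f x < c) ∧
      (∀ v, IsVertexOf v Q → f v ≠ c) ∧
      {v | IsVertexOf v Q ∧ c < f v}.ncard = s ∧
      (∀ v, IsVertexOf v Q → c < f v → v ∈ F) ∧
      Enew = F ∩ {x | f x = c}

/-- Combinatorial equivalence of polytopes: an inclusion-preserving bijection
between the sets of faces. -/
def CombEquiv (P Q : Set E3) : Prop :=
  ∃ φ : {A : Set E3 // IsFaceOf A P} ≃ {A : Set E3 // IsFaceOf A Q},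
    ∀ A B : {A : Set E3 // IsFaceOf A P}, A.1 ⊆ B.1 ↔ (φ A).1 ⊆ (φ B).1

/-- Combinatorial equivalence sending the face `Ep` of `P` to the face `Eq` of `Q`. -/
def CombEquivMapping (P Q Ep Eq : Set E3) : Prop :=
  ∃ φ : {A : Set E3 // IsFaceOf A P} ≃ {A : Set E3 // IsFaceOf A Q},
    (∀ A B : {A : Set E3 // IsFaceOf A P}, A.1 ⊆ B.1 ↔ (φ A).1 ⊆ (φ B).1) ∧
    ∀ h : IsFaceOf Ep P, ((φ ⟨Ep, h⟩) : {A : Set E3 // IsFaceOf A Q}).1 = Eq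

/-- The straightening of `P` along the edge `E` is defined: `P` is combinatorially
obtained from some simple 3-polytope `Q` by an `(s,k)`-truncation whose new edge
corresponds to `E`. -/
def StraighteningDefined (P E : Set E3) : Prop :=
  ∃ (s k t₀ t₁ : ℕ) (Q P₁ E₁ : Set E3),
    IsTruncation s k t₀ t₁ Q P₁ E₁ ∧ CombEquivMapping P P₁ E E₁

/-- `P` is obtained from `Q` by one of the truncations
`(1;4,5)`, `(1;5,5)`, `(2,6;4,5)`, `(2,6;5,5)`, `(2,6;5,6)`, `(2,7;5,5)`, `(2,7;5,6)`. -/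
def FullereneStep (Q P : Set E3) : Prop :=
  ∃ (s k t₀ t₁ : ℕ) (Enew : Set E3), IsTruncation s k t₀ t₁ Q P Enew ∧
    ((s = 1 ∧ (({t₀, t₁} : Finset ℕ) = {4, 5} ∨ ({t₀, t₁} : Finset ℕ) = {5, 5})) ∨
     (s = 2 ∧ k = 6 ∧ (({t₀, t₁} : Finset ℕ) = {4, 5} ∨ ({t₀, t₁} : Finset ℕ) = {5, 5} ∨
        ({t₀, t₁} : Finset ℕ) = {5, 6})) ∨
     (s = 2 ∧ k = 7 ∧ (({t₀, t₁} : Finset ℕ) = {5, 5} ∨ ({t₀, t₁} : Finset ℕ) = {5, 6})))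


open Set
open Set Filter Topology

theorem isVertexOf_iff {v : E3} {P : Set E3} : IsVertexOf v P ↔ v ∈ P.extremePoints ℝ := by
  unfold IsVertexOf IsFaceOf
  simp [isExtreme_singleton]

/-- Basic facts about a face of a polytope: it is the hull of the vertices it contains. -/
theorem polytope_compact {P : Set E3} (hP : IsPolytope P) : IsCompact P := by
  obtain ⟨V, rfl⟩ := hP
  exact V.finite_toSet.isCompact_convexHull ℝ

theorem polytope_convex {P : Set E3} (hP : IsPolytope P) : Convex ℝ P := by
  obtain ⟨V, rfl⟩ := hP
  exact convex_convexHull ℝ _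

theorem polytope_verts_finite {P : Set E3} (hP : IsPolytope P) :
    {v | IsVertexOf v P}.Finite := by
  obtain ⟨V, rfl⟩ := hP
  refine V.finite_toSet.subset ?_
  intro v hv
  exact extremePoints_convexHull_subset (isVertexOf_iff.1 hv)

theorem face_hull {P F : Set E3} (hP : IsPolytope P) (hF : IsFaceOf F P) :
    F = convexHull ℝ {v | IsVertexOf v P ∧ v ∈ F} := by
  obtain ⟨_, hc, hcv, hex⟩ := hF
  have hcomp : IsCompact F := (polytope_compact hP).of_isClosed_subset hc hex.1
  have h := closure_convexHull_extremePoints hcomp hcv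
  have he : F.extremePoints ℝ = {v | IsVertexOf v P ∧ v ∈ F} := by
    rw [hex.extremePoints_eq]
    ext v
    simp only [mem_inter_iff, mem_ofPred_eq, isVertexOf_iff]
    tauto
  rw [he] at h
  have hfin : {v | IsVertexOf v P ∧ v ∈ F}.Finite :=
    (polytope_verts_finite hP).subset fun v hv => hv.1
  rw [(hfin.isClosed_convexHull ℝ).closure_eq] at h
  exact h.symm

theorem face_has_vertex {P F : Set E3} (hP : IsPolytope P) (hF : IsFaceOf F P) :
    ∃ v, IsVertexOf v P ∧ v ∈ F := by
  by_contra hcon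
  push Not at hcon
  have h := face_hull hP hF
  have h0 : {v | IsVertexOf v P ∧ v ∈ F} = ∅ := by
    ext v; simp; exact hcon v
  rw [h0, convexHull_empty] at h
  exact hF.1.ne_empty h

theorem faces_finite {P : Set E3} (hP : IsPolytope P) : {F | IsFaceOf F P}.Finite := by
  have h1 : (𝒫 {v | IsVertexOf v P}).Finite := (polytope_verts_finite hP).finite_subsets
  refine (h1.image (fun S => convexHull ℝ S)).subset ?_
  intro F hF
  exact ⟨{v | IsVertexOf v P ∧ v ∈ F}, fun v hv => hv.1, (face_hull hP hF).symm⟩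

theorem facets_finite {P : Set E3} (hP : IsPolytope P) : {F | IsFacetOf F P}.Finite :=
  (faces_finite hP).subset fun _ h => h.1

/-- A relative interior point of a convex set. -/
theorem exists_relint {F : Set E3} (hc : Convex ℝ F) (hn : F.Nonempty) :
    ∃ z ∈ F, ∀ w ∈ affineSpan ℝ F, ∀ᶠ t in 𝓝 (0:ℝ), z + t • (w - z) ∈ F := by
  obtain ⟨z, hz⟩ := hn.intrinsicInterior hc
  obtain ⟨y, hy, rfl⟩ := mem_intrinsicInterior.1 hz
  refine ⟨y, intrinsicInterior_subset hz, fun w hw => ?_⟩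
  let g : ℝ → affineSpan ℝ F := fun t =>
    ⟨(y : E3) + t • (w - y), by
      have := AffineMap.lineMap_mem t y.2 hw
      rw [AffineMap.lineMap_apply] at this
      simpa [add_comm] using this⟩
  have hg : Continuous g := by
    refine Continuous.subtype_mk ?_ _
    fun_prop
  have hg0 : g 0 = y := by
    apply Subtype.ext; simp [g]
  have h1 : ∀ᶠ t in 𝓝 (0:ℝ), g t ∈ interior ((↑) ⁻¹' F : Set (affineSpan ℝ F)) := by
    apply hg.continuousAt.eventually
    rw [hg0]
    exact isOpen_interior.mem_nhds hy
  filter_upwards [h1] with t ht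
  exact interior_subset (s := ((↑) ⁻¹' F : Set (affineSpan ℝ F))) ht

theorem mem_openSegment_extend {w z : E3} {t : ℝ} (ht0 : 0 < t) :
    z ∈ openSegment ℝ w (z + (-t) • (w - z)) := by
  refine ⟨t/(1+t), 1/(1+t), by positivity, by positivity, by field_simp; ring, ?_⟩
  match_scalars <;> field_simp <;> ring

/-- `F` is the face of `P` supported by `u ≤ b`. -/
def Supp (P F : Set E3) (u : E3 →L[ℝ] ℝ) (b : ℝ) : Prop :=
  u ≠ 0 ∧ (∀ x ∈ P, u x ≤ b) ∧ ∀ x, x ∈ F ↔ x ∈ P ∧ u x = b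

theorem clm_ker_finrank {u : E3 →L[ℝ] ℝ} (hu : u ≠ 0) :
    Module.finrank ℝ (LinearMap.ker (u : E3 →ₗ[ℝ] ℝ)) = 2 := by
  have h := LinearMap.finrank_range_add_finrank_ker (u : E3 →ₗ[ℝ] ℝ)
  have h3 : Module.finrank ℝ E3 = 3 := by simp
  have h1 : LinearMap.range (u : E3 →ₗ[ℝ] ℝ) = ⊤ := by
    rw [LinearMap.range_eq_top]
    apply LinearMap.surjective
    intro h0
    apply hu
    ext x
    have := congrArg (fun g : E3 →ₗ[ℝ] ℝ => g x) h0
    simpa using this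
  rw [h1, finrank_top, h3] at h
  simp at h
  omega

theorem exists_clm_of_finrank_lt {W : Submodule ℝ E3} (hW : Module.finrank ℝ W < 3) :
    ∃ u : E3 →L[ℝ] ℝ, u ≠ 0 ∧ ∀ x ∈ W, u x = 0 := by
  have hlt : W < ⊤ := by
    rw [lt_top_iff_ne_top]
    rintro rfl
    simp at hW
  obtain ⟨f, hf, hle⟩ := Submodule.exists_le_ker_of_lt_top W hlt
  refine ⟨LinearMap.toContinuousLinearMap f, ?_, fun x hx => ?_⟩
  · intro h
    apply hf
    ext x
    have := congrArg (fun g : E3 →L[ℝ] ℝ => g x) h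
    simpa using this
  · simpa using hle hx

theorem facet_supp {P F : Set E3} (hP : Convex ℝ P) (hF : IsFacetOf F P) :
    ∃ u b, Supp P F u b := by
  obtain ⟨⟨hn, hc, hcv, hex⟩, hd⟩ := hF
  obtain ⟨z, hzF, hz⟩ := exists_relint hcv hn
  obtain ⟨u, hu0, hu⟩ := exists_clm_of_finrank_lt (W := vectorSpan ℝ F) (by
    unfold setDim at hd; omega)
  have hker : vectorSpan ℝ F = LinearMap.ker (u : E3 →ₗ[ℝ] ℝ) := by
    apply Submodule.eq_of_le_of_finrank_eq
    · intro x hx; simpa using hu x hx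
    · rw [clm_ker_finrank hu0]; exact hd
  have hspan : ∀ w, u w = u z → w ∈ affineSpan ℝ F := by
    intro w hw
    have h1 : w - z ∈ vectorSpan ℝ F := by rw [hker]; simp [hw]
    have h2 := AffineSubspace.vadd_mem_of_mem_direction
      (by rw [direction_affineSpan]; exact h1) (subset_affineSpan ℝ F hzF)
    simpa using h2
  have hFz : ∀ x ∈ F, u x = u z := by
    intro x hx
    have := hu _ (vsub_mem_vectorSpan ℝ hx hzF)
    simp at this
    linarith
  have hmem : ∀ w ∈ P, u w = u z → w ∈ F := by
    intro w hw hwz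
    have h1 : ∀ᶠ t in 𝓝 (0:ℝ), z + (-t) • (w - z) ∈ F := by
      have : Tendsto (fun t : ℝ => -t) (𝓝 0) (𝓝 0) := by simpa using (continuous_neg (G := ℝ)).tendsto 0
      exact this.eventually (hz w (hspan w hwz))
    have h2 : ∀ᶠ t in 𝓝[>] (0:ℝ), z + (-t) • (w - z) ∈ F := h1.filter_mono nhdsWithin_le_nhds
    obtain ⟨t, ht, ht0⟩ := (h2.and self_mem_nhdsWithin).exists
    have ht0 : 0 < t := ht0
    refine hex.left_mem_of_mem_openSegment hw (hex.1 ht) hzF ?_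
    exact mem_openSegment_extend ht0
  -- one-sidedness
  have hside : ∀ x ∈ P, ∀ y ∈ P, u x > u z → u y < u z → False := by
    intro x hx y hy hxz hyz
    set a := u x - u z with ha
    set c := u z - u y with hc'
    have ha0 : 0 < a := by linarith
    have hc0 : 0 < c := by linarith
    have hac : a + c ≠ 0 := by positivity
    let w := (c/(a+c)) • x + (a/(a+c)) • y
    have hw : u w = u z := by
      simp only [w, map_add, map_smul, smul_eq_mul]
      field_simp
      rw [show u x = a + u z by linarith, show u y = u z - c by linarith]
      ring
    have h2 : ∀ᶠ t in 𝓝[>] (0:ℝ), z + t • (w - z) ∈ F :=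
      (hz w (hspan w hw)).filter_mono nhdsWithin_le_nhds
    have h3 : ∀ᶠ t in 𝓝[>] (0:ℝ), t < 1 := 
      (eventually_lt_nhds (by norm_num)).filter_mono nhdsWithin_le_nhds
    obtain ⟨t, ⟨ht, ht1⟩, ht0⟩ := ((h2.and h3).and self_mem_nhdsWithin).exists
    have ht0 : 0 < t := ht0
    have hzP := hex.1 hzF
    have hx' : (1-t) • z + t • x ∈ P := hP hzP hx (by linarith) (by linarith) (by ring)
    have hy' : (1-t) • z + t • y ∈ P := hP hzP hy (by linarith) (by linarith) (by ring)
    have h4 := hex.left_mem_of_mem_openSegment hx' hy' ht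
      ⟨c/(a+c), a/(a+c), by positivity, by positivity, by field_simp; ring, by
        apply smul_right_injective _ hac
        simp only [w, smul_add, smul_smul, smul_sub, mul_div_cancel₀ _ hac, ← mul_assoc]
        simp only [mul_comm (a+c) t, mul_assoc, mul_div_cancel₀ _ hac]
        module⟩
    have h5 := hFz _ h4
    simp only [map_add, map_smul, smul_eq_mul] at h5
    nlinarith
  by_cases hup : ∃ x ∈ P, u x > u z
  · obtain ⟨x, hx, hxz⟩ := hup
    refine ⟨-u, -(u z), by simpa using hu0, ?_, ?_⟩
    · intro y hy
      by_contra h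
      simp at h
      exact hside x hx y hy hxz h
    · intro x
      simp only [neg_apply, neg_inj]
      exact ⟨fun h => ⟨hex.1 h, hFz x h⟩, fun h => hmem x h.1 h.2⟩
  · push Not at hup
    exact ⟨u, u z, hu0, hup, fun x => ⟨fun h => ⟨hex.1 h, hFz x h⟩, fun h => hmem x h.1 h.2⟩⟩

open Set Filter Topology

theorem polytope_interior_nonempty {P : Set E3} (hP : IsPolytope P) (hd : setDim P = 3) :
    (interior P).Nonempty := by
  rw [(polytope_convex hP).interior_nonempty_iff_affineSpan_eq_top]
  have hne : P.Nonempty := by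
    by_contra h
    rw [not_nonempty_iff_eq_empty] at h
    subst h
    rw [setDim, vectorSpan_empty, finrank_bot] at hd
    omega
  rw [AffineSubspace.affineSpan_eq_top_iff_vectorSpan_eq_top_of_nonempty ℝ E3 E3 hne]
  apply Submodule.eq_top_of_finrank_eq
  simpa [setDim] using hd

theorem supp_isFace {P : Set E3} {u : E3 →L[ℝ] ℝ} {b : ℝ} (hc : IsClosed P) (hcv : Convex ℝ P)
    (hle : ∀ x ∈ P, u x ≤ b) (hne : ∃ x ∈ P, u x = b) : IsFaceOf {x | x ∈ P ∧ u x = b} P := by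
  refine ⟨hne, ?_, ?_, ?_, ?_⟩
  · exact hc.inter (isClosed_eq u.continuous continuous_const)
  · intro x hx y hy s t hs ht hst
    refine ⟨hcv hx.1 hy.1 hs ht hst, ?_⟩
    simp only [map_add, map_smul, smul_eq_mul]
    rw [hx.2, hy.2, ← add_mul, hst, one_mul]
  · exact fun x hx => hx.1
  · rintro x hx y hy z ⟨hz, hzb⟩ ⟨s, t, hs, ht, hst, rfl⟩
    refine ⟨hx, ?_⟩
    simp only [map_add, map_smul, smul_eq_mul] at hzb
    have h1 := hle x hx
    have h2 := hle y hy
    have h3 : s * (b - u x) + t * (b - u y) = 0 := by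
      have : t = 1 - s := by linarith
      subst this; linarith
    have h4 : 0 ≤ t * (b - u y) := mul_nonneg ht.le (by linarith)
    have h5 : s * (b - u x) ≤ 0 := by linarith
    by_contra hne
    have : 0 < b - u x := lt_of_le_of_ne (by linarith) (fun h => hne (by linarith))
    have := mul_pos hs this
    linarith

theorem exists_facet_sep {P : Set E3} (hP : IsPolytope P) (hd : setDim P = 3) {x : E3}
    (hx : x ∉ P) :
    ∃ F, IsFacetOf F P ∧ ∃ z ∈ interior P, ∃ y ∈ F, ∃ t : ℝ, 0 < t ∧ t < 1 ∧
      y = z + t • (x - z) := by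
  have hcv := polytope_convex hP
  have hcomp := polytope_compact hP
  -- generic interior point
  have hgen : ∃ z ∈ interior P, ∀ F, IsFaceOf F P → setDim F ≤ 1 →
      z ∉ affineSpan ℝ (insert x F) := by
    by_contra hcon
    push Not at hcon
    have hfin : {F | IsFaceOf F P ∧ setDim F ≤ 1}.Finite := (faces_finite hP).subset fun _ h => h.1
    have hsub : interior P ⊆ ⋃ F ∈ {F | IsFaceOf F P ∧ setDim F ≤ 1},
        (affineSpan ℝ (insert x F) : Set E3) := by
      intro z hz
      obtain ⟨F, hF, h1, h2⟩ := hcon z hz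
      exact mem_biUnion (show F ∈ {F | IsFaceOf F P ∧ setDim F ≤ 1} from ⟨hF, h1⟩) h2
    have h0 : MeasureTheory.volume (⋃ F ∈ {F | IsFaceOf F P ∧ setDim F ≤ 1},
        (affineSpan ℝ (insert x F) : Set E3)) = 0 := by
      rw [MeasureTheory.measure_biUnion_null_iff hfin.countable]
      rintro F ⟨hF, h1⟩
      apply MeasureTheory.Measure.addHaar_affineSubspace
      intro htop
      have h2 := finrank_vectorSpan_insert_le_set ℝ F x
      rw [← direction_affineSpan, htop, AffineSubspace.direction_top, finrank_top] at h2
      simp only [finrank_euclideanSpace, Fintype.card_fin] at h2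
      unfold setDim at h1
      omega
    have h1 := MeasureTheory.measure_mono_null hsub h0
    exact (isOpen_interior.measure_pos MeasureTheory.volume
      (polytope_interior_nonempty hP hd)).ne' h1
  obtain ⟨z, hz, hzgen⟩ := hgen
  have hzP := interior_subset hz
  -- exit point
  let g : ℝ → E3 := fun t => z + t • (x - z)
  have hg : Continuous g := by fun_prop
  have hK : IsCompact (Icc (0:ℝ) 1 ∩ g ⁻¹' P) :=
    isCompact_Icc.inter_right (hcomp.isClosed.preimage hg)
  obtain ⟨t, ⟨⟨ht0, ht1⟩, htP⟩, htmax⟩ := hK.exists_isMaxOn ⟨0, by simp [g, hzP]⟩ continuousOn_id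
  have htP : g t ∈ P := htP
  have ht1' : t < 1 := by
    refine lt_of_le_of_ne ht1 ?_
    rintro rfl
    apply hx
    simpa [g] using htP
  have hni : g t ∉ interior P := by
    intro hi
    have h1 : ∀ᶠ s in 𝓝 t, g s ∈ interior P := hg.continuousAt.eventually (isOpen_interior.mem_nhds hi)
    have h2 : ∀ᶠ s in 𝓝 t, s < 1 := eventually_lt_nhds ht1'
    have h3 : ∀ᶠ s in 𝓝[>] t, g s ∈ interior P ∧ s < 1 := (h1.and h2).filter_mono nhdsWithin_le_nhds
    obtain ⟨s, ⟨hs1, hs2⟩, hs⟩ := (h3.and self_mem_nhdsWithin).exists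
    have hs : t < s := hs
    have := htmax (show s ∈ Icc (0:ℝ) 1 ∩ g ⁻¹' P from ⟨⟨by linarith, hs2.le⟩, interior_subset (s := P) hs1⟩)
    simp at this
    linarith
  have ht0' : 0 < t := by
    refine lt_of_le_of_ne ht0 ?_
    rintro rfl
    apply hni
    simpa [g] using hz
  obtain ⟨u, hu⟩ := geometric_hahn_banach_open_point hcv.interior isOpen_interior hni
  have hule : ∀ a ∈ P, u a ≤ u (g t) := by
    intro a ha
    have h1 : a ∈ closure (interior P) := by
      rw [hcv.closure_interior_eq_closure_of_nonempty_interior ⟨z, hz⟩]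
      exact subset_closure ha
    exact closure_minimal (fun a ha => (hu a ha).le)
      (isClosed_le u.continuous continuous_const) h1
  have hu0 : u ≠ 0 := by
    rintro rfl
    simpa using hu z hz
  have hface := supp_isFace hcomp.isClosed hcv hule ⟨g t, htP, rfl⟩
  refine ⟨{a | a ∈ P ∧ u a = u (g t)}, ⟨hface, ?_⟩, z, hz, g t, ⟨htP, rfl⟩, t, ht0', ht1', rfl⟩
  have hle2 : setDim {a | a ∈ P ∧ u a = u (g t)} ≤ 2 := by
    rw [← clm_ker_finrank hu0]
    apply Submodule.finrank_mono
    rw [vectorSpan_def, Submodule.span_le]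
    rintro _ ⟨a, ha, b, hb, rfl⟩
    simp [ha.2, hb.2]
  have hge : ¬ setDim {a | a ∈ P ∧ u a = u (g t)} ≤ 1 := by
    intro h
    apply hzgen _ hface h
    have h1 : x ∈ affineSpan ℝ (insert x {a | a ∈ P ∧ u a = u (g t)}) :=
      subset_affineSpan _ _ (mem_insert _ _)
    have h2 : g t ∈ affineSpan ℝ (insert x {a | a ∈ P ∧ u a = u (g t)}) :=
      subset_affineSpan _ _ (mem_insert_of_mem _ ⟨htP, rfl⟩)
    have h3 := AffineMap.lineMap_mem (1/(1-t)) h1 h2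
    convert h3 using 1
    have : 1 - t ≠ 0 := by linarith
    rw [AffineMap.lineMap_apply]
    simp only [g, vsub_eq_sub, vadd_eq_add]
    match_scalars <;> field_simp <;> ring
  omega

/-- Data of supporting functionals for all facets. -/
structure HRep (P : Set E3) (u : Set E3 → E3 →L[ℝ] ℝ) (b : Set E3 → ℝ) : Prop where
  supp : ∀ F, IsFacetOf F P → Supp P F (u F) (b F)
  mem : ∀ x, (∀ F, IsFacetOf F P → u F x ≤ b F) → x ∈ P

theorem supp_interior_lt {P F : Set E3} {u : E3 →L[ℝ] ℝ} {b : ℝ} (h : Supp P F u b) {z : E3}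
    (hz : z ∈ interior P) : u z < b := by
  obtain ⟨hu, hle, _⟩ := h
  refine lt_of_le_of_ne (hle z (interior_subset hz)) ?_
  intro heq
  obtain ⟨d, hd⟩ : ∃ d, u d ≠ 0 := by
    by_contra hcon
    push Not at hcon
    exact hu (by ext x; simp [hcon x])
  have key : ∀ d : E3, u d > 0 → False := by
    intro d hd
    have hg : Continuous (fun t : ℝ => z + t • d) := by fun_prop
    have h1 : ∀ᶠ t in 𝓝 (0:ℝ), z + t • d ∈ interior P := by
      apply hg.continuousAt.eventually
      simpa using isOpen_interior.mem_nhds hz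
    obtain ⟨t, ht, ht0⟩ := ((h1.filter_mono (nhdsWithin_le_nhds (s := Ioi 0))).and self_mem_nhdsWithin).exists
    have ht0 : 0 < t := ht0
    have := hle _ (interior_subset ht)
    simp at this
    have := mul_pos ht0 hd
    linarith
  rcases lt_or_gt_of_ne hd with h | h
  · exact key (-d) (by simpa using h)
  · exact key d h

theorem exists_hrep {P : Set E3} (hP : IsPolytope P) (hd : setDim P = 3) :
    ∃ u b, HRep P u b := by
  have h : ∀ F, ∃ u b, IsFacetOf F P → Supp P F u b := by
    intro F
    by_cases hF : IsFacetOf F P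
    · obtain ⟨u, b, h⟩ := facet_supp (polytope_convex hP) hF
      exact ⟨u, b, fun _ => h⟩
    · exact ⟨0, 0, fun h => absurd h hF⟩
  choose u b hub using h
  refine ⟨u, b, hub, ?_⟩
  intro x hx
  by_contra hxP
  obtain ⟨F, hF, z, hz, y, hy, t, ht0, ht1, rfl⟩ := exists_facet_sep hP hd hxP
  have h1 := supp_interior_lt (hub F hF) hz
  have h2 := (((hub F hF).2.2 _).1 hy).2
  have h3 := hx F hF
  simp at h2
  nlinarith

open Set Filter Topology

theorem HRep.local_mem {P : Set E3} {u : Set E3 → E3 →L[ℝ] ℝ} {b : Set E3 → ℝ} (h : HRep P u b)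
    (hP : IsPolytope P) {v d : E3} (hv : v ∈ P)
    (hd : ∀ F, IsFacetOf F P → v ∈ F → u F d ≤ 0) :
    ∀ᶠ t in 𝓝[>] (0:ℝ), v + t • d ∈ P := by
  have key : ∀ᶠ t in 𝓝[>] (0:ℝ), ∀ F ∈ {F | IsFacetOf F P}, u F (v + t • d) ≤ b F := by
    rw [(facets_finite hP).eventually_all]
    intro F hF
    by_cases hvF : v ∈ F
    · filter_upwards [self_mem_nhdsWithin] with t ht
      have ht : 0 < t := ht
      have h1 := (((h.supp F hF).2.2 v).1 hvF).2
      have h2 := hd F hF hvF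
      simp only [map_add, map_smul, smul_eq_mul]
      nlinarith
    · have h1 : u F v < b F := by
        refine lt_of_le_of_ne ((h.supp F hF).2.1 v hv) ?_
        intro h2
        exact hvF (((h.supp F hF).2.2 v).2 ⟨hv, h2⟩)
      have hc : Continuous (fun t : ℝ => u F (v + t • d)) := by fun_prop
      have h2 : ∀ᶠ t in 𝓝 (0:ℝ), u F (v + t • d) < b F := by
        exact hc.continuousAt.eventually_lt continuousAt_const (by simpa using h1)
      filter_upwards [h2.filter_mono nhdsWithin_le_nhds] with t ht
      exact ht.le
  filter_upwards [key] with t ht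
  exact h.mem _ ht

theorem mid_mem_openSegment {v d : E3} {t : ℝ} :
    v ∈ openSegment ℝ (v + t • d) (v + t • (-d)) := by
  refine ⟨1/2, 1/2, by norm_num, by norm_num, by norm_num, ?_⟩
  module

theorem facets_at_vertex {P : Set E3} (hS : IsSimplePolytope3 P) {v : E3} (hv : IsVertexOf v P)
    {F G H : Set E3} (hF : IsFacetOf F P) (hG : IsFacetOf G P) (hH : IsFacetOf H P)
    (hFG : F ≠ G) (hFH : F ≠ H) (hGH : G ≠ H) (vF : v ∈ F) (vG : v ∈ G) (vH : v ∈ H)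
    {X : Set E3} (hX : IsFacetOf X P) (vX : v ∈ X) : X = F ∨ X = G ∨ X = H := by
  have h3 := hS.2.2 v hv
  have hfin : {F | IsFacetOf F P ∧ v ∈ F}.Finite := (facets_finite hS.1).subset fun _ h => h.1
  have hsub : ({F, G, H} : Set (Set E3)) ⊆ {F | IsFacetOf F P ∧ v ∈ F} := by
    rintro Y (rfl | rfl | rfl)
    exacts [⟨hF, vF⟩, ⟨hG, vG⟩, ⟨hH, vH⟩]
  have hc : ({F, G, H} : Set (Set E3)).ncard = 3 := by
    rw [ncard_eq_three]; exact ⟨F, G, H, hFG, hFH, hGH, rfl⟩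
  have heq := eq_of_subset_of_ncard_le hsub (by rw [h3, hc]) hfin
  have : X ∈ ({F, G, H} : Set (Set E3)) := by rw [heq]; exact ⟨hX, vX⟩
  simpa using this

theorem exists_third {P : Set E3} (hS : IsSimplePolytope3 P) {v : E3} (hv : IsVertexOf v P)
    {F G : Set E3} :
    ∃ H, IsFacetOf H P ∧ H ≠ F ∧ H ≠ G ∧ v ∈ H := by
  have h3 := hS.2.2 v hv
  by_contra hcon
  push Not at hcon
  have hsub : {F | IsFacetOf F P ∧ v ∈ F} ⊆ {F, G} := by
    rintro X ⟨hX, vX⟩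
    by_contra h
    simp at h
    exact hcon X hX h.1 h.2 vX
  have h1 := ncard_le_ncard hsub (by simp)
  have h2 : ({F, G} : Set (Set E3)).ncard ≤ 2 := ncard_insert_le _ _ |>.trans (by simp)
  omega

theorem vertex_indep {P : Set E3} {u : Set E3 → E3 →L[ℝ] ℝ} {b : Set E3 → ℝ} (h : HRep P u b)
    (hS : IsSimplePolytope3 P) {v : E3} (hv : IsVertexOf v P)
    {F G H : Set E3} (hF : IsFacetOf F P) (hG : IsFacetOf G P) (hH : IsFacetOf H P)
    (hFG : F ≠ G) (hFH : F ≠ H) (hGH : G ≠ H) (vF : v ∈ F) (vG : v ∈ G) (vH : v ∈ H)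
    {d : E3} (h1 : u F d = 0) (h2 : u G d = 0) (h3 : u H d = 0) : d = 0 := by
  have hv' := isVertexOf_iff.1 hv
  have hz : ∀ X, IsFacetOf X P → v ∈ X → u X d = 0 := by
    intro X hX vX
    rcases facets_at_vertex hS hv hF hG hH hFG hFH hGH vF vG vH hX vX with rfl | rfl | rfl <;>
      assumption
  have e1 := h.local_mem hS.1 (d := d) hv'.1 (fun X hX vX => (hz X hX vX).le)
  have e2 := h.local_mem hS.1 (d := -d) hv'.1 (fun X hX vX => by simp [hz X hX vX])
  obtain ⟨t, ⟨ht1, ht2⟩, ht0⟩ := ((e1.and e2).and self_mem_nhdsWithin).exists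
  have ht0 : 0 < t := ht0
  have := hv'.2 ht1 ht2 mid_mem_openSegment
  have h4 : t • d = 0 := by simpa using this
  exact (smul_eq_zero.1 h4).resolve_left ht0.ne'

/-- Two vertices lying in three common facets coincide. -/
theorem vertex_unique {P : Set E3} (hS : IsSimplePolytope3 P) {v w : E3} (hv : IsVertexOf v P)
    {F G H : Set E3} (hF : IsFacetOf F P) (hG : IsFacetOf G P) (hH : IsFacetOf H P)
    (hFG : F ≠ G) (hFH : F ≠ H) (hGH : G ≠ H) (vF : v ∈ F) (vG : v ∈ G) (vH : v ∈ H)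
    (wF : w ∈ F) (wG : w ∈ G) (wH : w ∈ H) : w = v := by
  obtain ⟨u, b, h⟩ := exists_hrep hS.1 hS.2.1
  have key : ∀ X, IsFacetOf X P → v ∈ X → w ∈ X → u X (w - v) = 0 := by
    intro X hX vX wX
    have h1 := (((h.supp X hX).2.2 v).1 vX).2
    have h2 := (((h.supp X hX).2.2 w).1 wX).2
    simp [h1, h2]
  have := vertex_indep h hS hv hF hG hH hFG hFH hGH vF vG vH (key F hF vF wF) (key G hG vG wG)
    (key H hH vH wH)
  exact sub_eq_zero.1 this

theorem face_inter {P F G : Set E3} (hF : IsFacetOf F P) (hG : IsFacetOf G P)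
    (hne : (F ∩ G).Nonempty) : IsFaceOf (F ∩ G) P :=
  ⟨hne, hF.1.2.1.inter hG.1.2.1, hF.1.2.2.1.inter hG.1.2.2.1, hF.1.2.2.2.inter hG.1.2.2.2⟩

theorem face_subset {P F : Set E3} (hF : IsFacetOf F P) : F ⊆ P := hF.1.2.2.2.1

theorem inter_has_vertex {P F G : Set E3} (hS : IsSimplePolytope3 P) (hF : IsFacetOf F P)
    (hG : IsFacetOf G P) (hne : (F ∩ G).Nonempty) : ∃ v, IsVertexOf v P ∧ v ∈ F ∧ v ∈ G :=
  face_has_vertex hS.1 (face_inter hF hG hne)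

/-- Two distinct facets through a vertex share exactly two vertices. -/
theorem inter_two {P : Set E3} (hS : IsSimplePolytope3 P) {v : E3} (hv : IsVertexOf v P)
    {F G : Set E3} (hF : IsFacetOf F P) (hG : IsFacetOf G P) (hFG : F ≠ G)
    (vF : v ∈ F) (vG : v ∈ G) :
    ∃ w, w ≠ v ∧ IsVertexOf w P ∧ w ∈ F ∧ w ∈ G ∧
      ∀ x, IsVertexOf x P → x ∈ F → x ∈ G → x = v ∨ x = w := by
  obtain ⟨u, b, h⟩ := exists_hrep hS.1 hS.2.1
  obtain ⟨H, hH, hHF, hHG, vH⟩ := exists_third hS hv (F := F) (G := G)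
  have hv' := isVertexOf_iff.1 hv
  have hind : ∀ d, u F d = 0 → u G d = 0 → u H d = 0 → d = 0 := fun d h1 h2 h3 =>
    vertex_indep h hS hv hF hG hH hFG hHF.symm hHG.symm vF vG vH h1 h2 h3
  let L : E3 →ₗ[ℝ] (Fin 3 → ℝ) := LinearMap.pi ![(u F : E3 →ₗ[ℝ] ℝ), (u G : E3 →ₗ[ℝ] ℝ), (u H : E3 →ₗ[ℝ] ℝ)]
  have hL : Function.Injective L := by
    rw [← LinearMap.ker_eq_bot, LinearMap.ker_eq_bot']
    intro d hd
    have h0 := congrFun hd 0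
    have h1 := congrFun hd 1
    have h2 := congrFun hd 2
    simp [L] at h0 h1 h2
    exact hind d h0 h1 h2
  have hsurj : Function.Surjective L := by
    rwa [← LinearMap.injective_iff_surjective_of_finrank_eq_finrank]
    simp
  obtain ⟨d, hd⟩ := hsurj ![0, 0, -1]
  have d1 : u F d = 0 := by simpa [L] using congrFun hd 0
  have d2 : u G d = 0 := by simpa [L] using congrFun hd 1
  have d3 : u H d = -1 := by simpa [L] using congrFun hd 2
  have hd0 : d ≠ 0 := by rintro rfl; simp at d3
  have e1 := h.local_mem hS.1 (d := d) hv'.1 (fun X hX vX => by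
    rcases facets_at_vertex hS hv hF hG hH hFG hHF.symm hHG.symm vF vG vH hX vX with
      rfl | rfl | rfl <;> linarith)
  obtain ⟨t, ht, ht0⟩ := (e1.and self_mem_nhdsWithin).exists
  have ht0 : 0 < t := ht0
  have hvF := (((h.supp F hF).2.2 v).1 vF).2
  have hvG := (((h.supp G hG).2.2 v).1 vG).2
  have hvH := (((h.supp H hH).2.2 v).1 vH).2
  have hmem : v + t • d ∈ F ∩ G := by
    constructor
    · rw [(h.supp F hF).2.2]; exact ⟨ht, by simp [hvF, d1]⟩
    · rw [(h.supp G hG).2.2]; exact ⟨ht, by simp [hvG, d2]⟩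
  have hface := face_inter hF hG ⟨v, vF, vG⟩
  have hw : ∃ w, w ≠ v ∧ IsVertexOf w P ∧ w ∈ F ∧ w ∈ G := by
    by_contra hcon
    push Not at hcon
    have h1 := face_hull hS.1 hface
    have h2 : {x | IsVertexOf x P ∧ x ∈ F ∩ G} ⊆ {v} := by
      rintro x ⟨hx, xF, xG⟩
      by_contra hne
      exact hcon x hne hx xF xG
    have h3 := convexHull_mono (𝕜 := ℝ) h2
    rw [← h1, convexHull_singleton] at h3
    have h4 : v + t • d = v := h3 hmem
    simp at h4
    rcases h4 with h4 | h4
    · linarith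
    · exact hd0 h4
  have hpar : ∀ x, IsVertexOf x P → x ∈ F → x ∈ G → ∃ s : ℝ, 0 ≤ s ∧ x = v + s • d := by
    intro x hx xF xG
    have hxF := (((h.supp F hF).2.2 x).1 xF).2
    have hxG := (((h.supp G hG).2.2 x).1 xG).2
    have hxH := (h.supp H hH).2.1 x (isVertexOf_iff.1 hx).1
    refine ⟨u H v - u H x, by linarith, ?_⟩
    have := hind (x - v - (u H v - u H x) • d) (by simp [hxF, hvF, d1]) (by simp [hxG, hvG, d2])
      (by simp [d3])
    have h5 := sub_eq_zero.1 this
    rw [← h5]; abel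
  obtain ⟨w, hwv, hw, wF, wG⟩ := hw
  refine ⟨w, hwv, hw, wF, wG, ?_⟩
  intro x hx xF xG
  by_contra hcon
  push Not at hcon
  obtain ⟨s, hs, hsx⟩ := hpar x hx xF xG
  obtain ⟨r, hr, hrw⟩ := hpar w hw wF wG
  have aux : ∀ s r : ℝ, 0 < s → s < r → v + s • d ∈ openSegment ℝ v (v + r • d) := by
    intro s r hs hsr
    have hr : 0 < r := by linarith
    refine ⟨1 - s/r, s/r, by rw [sub_pos, div_lt_one hr]; exact hsr, by positivity, by ring, ?_⟩
    match_scalars <;> field_simp <;> ring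
  have hs0 : 0 < s := lt_of_le_of_ne hs (by rintro rfl; exact hcon.1 (by simp [hsx]))
  have hr0 : 0 < r := lt_of_le_of_ne hr (by rintro rfl; exact hwv (by simp [hrw]))
  rcases lt_trichotomy s r with hlt | rfl | hlt
  · have h1 := aux s r hs0 hlt
    rw [← hsx, ← hrw] at h1
    exact hcon.1 ((isVertexOf_iff.1 hx).2 hv'.1 (isVertexOf_iff.1 hw).1 h1).symm
  · exact hcon.2 (hsx.trans hrw.symm)
  · have h1 := aux r s hr0 hlt
    rw [← hsx, ← hrw] at h1
    exact hwv ((isVertexOf_iff.1 hw).2 hv'.1 (isVertexOf_iff.1 hx).1 h1).symm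

open Set Filter Topology

/-- The facets adjacent to `F`. -/
def nbrs (P F : Set E3) : Set (Set E3) := {G | IsFacetOf G P ∧ G ≠ F ∧ (F ∩ G).Nonempty}

theorem setDim_convexHull_pair {v w : E3} (h : w ≠ v) : setDim (convexHull ℝ {v, w}) = 1 := by
  unfold setDim
  rw [← direction_affineSpan, affineSpan_convexHull, direction_affineSpan, vectorSpan_pair_rev]
  apply finrank_span_singleton
  simpa [sub_eq_zero] using h

theorem inter_eq_hull {P : Set E3} (hS : IsSimplePolytope3 P)
    {F G : Set E3} (hF : IsFacetOf F P) (hG : IsFacetOf G P) (hFG : F ≠ G)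
    (hne : (F ∩ G).Nonempty) :
    ∃ v w, w ≠ v ∧ IsVertexOf v P ∧ IsVertexOf w P ∧ F ∩ G = convexHull ℝ {v, w} := by
  obtain ⟨v, hv, vF, vG⟩ := inter_has_vertex hS hF hG hne
  obtain ⟨w, hwv, hw, wF, wG, hall⟩ := inter_two hS hv hF hG hFG vF vG
  refine ⟨v, w, hwv, hv, hw, ?_⟩
  have h1 := face_hull hS.1 (face_inter hF hG hne)
  have h2 : {x | IsVertexOf x P ∧ x ∈ F ∩ G} = {v, w} := by
    ext x
    constructor
    · rintro ⟨hx, xF, xG⟩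
      exact hall x hx xF xG
    · rintro (rfl | rfl)
      exacts [⟨hv, vF, vG⟩, ⟨hw, wF, wG⟩]
  rw [h2] at h1
  exact h1

theorem edge_eq_inter {P : Set E3} (hS : IsSimplePolytope3 P) {F e : Set E3}
    (hF : IsFacetOf F P) (he : IsEdgeOf e P) (heF : e ⊆ F) :
    ∃ G ∈ nbrs P F, F ∩ G = e := by
  obtain ⟨u, b, h⟩ := exists_hrep hS.1 hS.2.1
  obtain ⟨⟨hn, hcl, hcv, hex⟩, hd⟩ := he
  obtain ⟨z, hze, hz⟩ := exists_relint hcv hn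
  have hzP := hex.1 hze
  have hG : ∃ G, IsFacetOf G P ∧ G ≠ F ∧ z ∈ G := by
    by_contra hcon
    push Not at hcon
    have hle : LinearMap.ker (u F : E3 →ₗ[ℝ] ℝ) ≤ vectorSpan ℝ e := by
      intro k hk
      have hk : u F k = 0 := by simpa using hk
      have hz' : ∀ X, IsFacetOf X P → z ∈ X → u X k = 0 := by
        intro X hX zX
        by_cases hXF : X = F
        · rw [hXF]; exact hk
        · exact absurd zX (hcon X hX hXF)
      have e1 := h.local_mem hS.1 (d := k) hzP (fun X hX vX => (hz' X hX vX).le)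
      have e2 := h.local_mem hS.1 (d := -k) hzP (fun X hX vX => by simp [hz' X hX vX])
      obtain ⟨t, ⟨ht1, ht2⟩, ht0⟩ := ((e1.and e2).and self_mem_nhdsWithin).exists
      have ht0 : 0 < t := ht0
      have h3 := hex.left_mem_of_mem_openSegment ht1 ht2 hze mid_mem_openSegment
      have h4 := vsub_mem_vectorSpan ℝ h3 hze
      simp at h4
      exact (Submodule.smul_mem_iff _ ht0.ne').1 h4
    have := Submodule.finrank_mono hle
    rw [clm_ker_finrank (h.supp F hF).1] at this
    unfold setDim at hd
    omega
  obtain ⟨G, hG, hGF, zG⟩ := hG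
  have heG : e ⊆ G := by
    intro x hx
    have h1 : ∀ᶠ t in 𝓝 (0:ℝ), z + (-t) • (x - z) ∈ e := by
      have : Tendsto (fun t : ℝ => -t) (𝓝 0) (𝓝 0) := by
        simpa using (continuous_neg (G := ℝ)).tendsto 0
      exact this.eventually (hz x (subset_affineSpan _ _ hx))
    obtain ⟨t, ht, ht0⟩ :=
      ((h1.filter_mono (nhdsWithin_le_nhds (s := Ioi 0))).and self_mem_nhdsWithin).exists
    exact hG.1.2.2.2.left_mem_of_mem_openSegment (hex.1 hx) (hex.1 ht) zG
      (mem_openSegment_extend ht0)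
  have hsub : e ⊆ F ∩ G := fun x hx => ⟨heF hx, heG hx⟩
  refine ⟨G, ⟨hG, hGF, ⟨z, heF hze, zG⟩⟩, ?_⟩
  have hef : IsFaceOf e P := ⟨hn, hcl, hcv, hex⟩
  obtain ⟨v, hv, ve⟩ := face_has_vertex hS.1 hef
  have h1 := face_hull hS.1 hef
  have hw : ∃ w, w ≠ v ∧ IsVertexOf w P ∧ w ∈ e := by
    by_contra hcon
    push Not at hcon
    have h2 : {x | IsVertexOf x P ∧ x ∈ e} = {v} := by
      ext x
      constructor
      · rintro ⟨hx, xe⟩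
        by_contra hne
        exact hcon x hne hx xe
      · rintro rfl
        exact ⟨hv, ve⟩
    rw [h2, convexHull_singleton] at h1
    rw [h1, setDim, vectorSpan_singleton, finrank_bot] at hd
    omega
  obtain ⟨w, hwv, hw, we⟩ := hw
  obtain ⟨w', hwv', hw', wF', wG', hall⟩ := inter_two hS hv hF hG hGF.symm (hsub ve).1 (hsub ve).2
  have hww : w = w' := (hall w hw (hsub we).1 (hsub we).2).resolve_left hwv
  subst hww
  have h3 := face_hull hS.1 (face_inter hF hG ⟨z, heF hze, zG⟩)
  refine Subset.antisymm ?_ hsub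
  rw [h3]
  apply convexHull_min _ hcv
  rintro x ⟨hx, xF, xG⟩
  rcases hall x hx xF xG with rfl | rfl <;> assumption

theorem facetEdges_eq {P : Set E3} (hS : IsSimplePolytope3 P) {F : Set E3}
    (hF : IsFacetOf F P) : facetEdges P F = (nbrs P F).ncard := by
  unfold facetEdges
  have h1 : {e | IsEdgeOf e P ∧ e ⊆ F} = (fun G => F ∩ G) '' nbrs P F := by
    ext e
    constructor
    · rintro ⟨he, heF⟩
      obtain ⟨G, hG, h⟩ := edge_eq_inter hS hF he heF
      exact ⟨G, hG, h⟩
    · rintro ⟨G, ⟨hG, hGF, hne⟩, rfl⟩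
      refine ⟨⟨face_inter hF hG hne, ?_⟩, inter_subset_left⟩
      obtain ⟨v, w, hwv, _, _, h⟩ := inter_eq_hull hS hF hG hGF.symm hne
      show setDim (F ∩ G) = 1
      rw [h]
      exact setDim_convexHull_pair hwv
  rw [h1]
  apply InjOn.ncard_image
  rintro G ⟨hG, hGF, hGn⟩ H ⟨hH, hHF, hHn⟩ heq
  have heq : F ∩ G = F ∩ H := heq
  by_contra hGH
  obtain ⟨v, hv, vF, vG⟩ := inter_has_vertex hS hF hG hGn
  obtain ⟨w, hwv, hw, wF, wG, hall⟩ := inter_two hS hv hF hG hGF.symm vF vG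
  have vH : v ∈ F ∩ H := heq ▸ ⟨vF, vG⟩
  have wH : w ∈ F ∩ H := heq ▸ ⟨wF, wG⟩
  exact hwv (vertex_unique hS hv hF hG hH hGF.symm hHF.symm hGH vF vG vH.2 wF wG wH.2)

/-- The section of `P` by a plane through three points on three facets' pairwise intersections. -/
theorem section_subset {P F G H : Set E3} (hP : IsPolytope P) (hF : IsFacetOf F P)
    (hG : IsFacetOf G P) (hH : IsFacetOf H P) {p q r : E3} (pF : p ∈ F) (pG : p ∈ G) (pH : p ∉ H)
    (qG : q ∈ G) (qH : q ∈ H) (qF : q ∉ F) (rH : r ∈ H) (rF : r ∈ F) (rG : r ∉ G)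
    {f : E3 →L[ℝ] ℝ} {c : ℝ} (hf : f ≠ 0) (fp : f p = c) (fq : f q = c) (fr : f r = c)
    {x : E3} (hx : x ∈ P) (fx : f x = c) :
    ∃ α β γ : ℝ, 0 ≤ α ∧ 0 ≤ β ∧ 0 ≤ γ ∧ α + β + γ = 1 ∧ x = α • p + β • q + γ • r := by
  obtain ⟨u₁, b₁, h₁⟩ := facet_supp (polytope_convex hP) hF
  obtain ⟨u₂, b₂, h₂⟩ := facet_supp (polytope_convex hP) hG
  obtain ⟨u₃, b₃, h₃⟩ := facet_supp (polytope_convex hP) hH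
  have lt : ∀ {X : Set E3} {u : E3 →L[ℝ] ℝ} {b : ℝ}, Supp P X u b → ∀ y ∈ P, y ∉ X → u y < b := by
    intro X u b h y hy hyX
    exact lt_of_le_of_ne (h.2.1 y hy) (fun h' => hyX ((h.2.2 y).2 ⟨hy, h'⟩))
  have eq : ∀ {X : Set E3} {u : E3 →L[ℝ] ℝ} {b : ℝ}, Supp P X u b → ∀ y ∈ X, u y = b :=
    fun h y hy => ((h.2.2 y).1 hy).2
  have pP := face_subset hF pF
  have qP := face_subset hG qG
  have rP := face_subset hH rH
  have p1 := eq h₁ p pF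
  have p2 := eq h₂ p pG
  have p3 := lt h₃ p pP pH
  have q2 := eq h₂ q qG
  have q3 := eq h₃ q qH
  have q1 := lt h₁ q qP qF
  have r3 := eq h₃ r rH
  have r1 := eq h₁ r rF
  have r2 := lt h₂ r rP rG
  have hli : LinearIndependent ℝ ![p - r, q - r] := by
    rw [LinearIndependent.pair_iff]
    intro s t hst
    have e1 := congrArg u₁ hst
    have e3 := congrArg u₃ hst
    simp only [map_add, map_smul, map_sub, smul_eq_mul, map_zero, p1, q3, r1, r3, sub_self,
      mul_zero, add_zero, zero_add] at e1 e3
    constructor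
    · rcases mul_eq_zero.1 e3 with h | h
      · exact h
      · linarith
    · rcases mul_eq_zero.1 e1 with h | h
      · exact h
      · linarith
  have hspan : Submodule.span ℝ {p - r, q - r} = LinearMap.ker (f : E3 →ₗ[ℝ] ℝ) := by
    apply Submodule.eq_of_le_of_finrank_eq
    · rw [Submodule.span_le]
      rintro y (rfl | rfl) <;> simp [fp, fq, fr]
    · rw [clm_ker_finrank hf]
      have := finrank_span_eq_card hli
      have hrg : range ![p - r, q - r] = {p - r, q - r} := by
        ext y; simp [or_comm]
      rw [hrg] at this
      simpa using this
  have hxk : x - r ∈ Submodule.span ℝ {p - r, q - r} := by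
    rw [hspan]; simp [fx, fr]
  obtain ⟨α, β, hab⟩ := Submodule.mem_span_pair.1 hxk
  have hxe : x = α • p + β • q + (1 - α - β) • r := by
    have : x = (α • (p - r) + β • (q - r)) + r := by rw [hab]; abel
    rw [this]; module
  have x1 := h₁.2.1 x hx
  have x2 := h₂.2.1 x hx
  have x3 := h₃.2.1 x hx
  rw [hxe] at x1 x2 x3
  simp only [map_add, map_smul, smul_eq_mul, p1, p2, q2, q3, r1, r3] at x1 x2 x3
  refine ⟨α, β, 1 - α - β, ?_, ?_, ?_, by ring, hxe⟩
  · by_contra hneg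
    push Not at hneg
    nlinarith [mul_pos_of_neg_of_neg hneg (sub_neg.2 p3)]
  · by_contra hneg
    push Not at hneg
    nlinarith [mul_pos_of_neg_of_neg hneg (sub_neg.2 q1)]
  · by_contra hneg
    push Not at hneg
    nlinarith [mul_pos_of_neg_of_neg hneg (sub_neg.2 r2)]

theorem vertex_of_comb {P : Set E3} (hP : Convex ℝ P) {p q r x : E3} (hp : p ∈ P) (hq : q ∈ P)
    (hr : r ∈ P) (hx : IsVertexOf x P) {α β γ : ℝ} (h1 : 0 ≤ α) (h2 : 0 ≤ β) (h3 : 0 ≤ γ)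
    (h4 : α + β + γ = 1) (h5 : x = α • p + β • q + γ • r) : x = p ∨ x = q ∨ x = r := by
  have hx' := (isVertexOf_iff.1 hx)
  have hmem : x ∈ convexHull ℝ {p, q, r} := by
    rw [h5]
    have hc := convex_convexHull ℝ ({p, q, r} : Set E3)
    have hp' := subset_convexHull ℝ ({p, q, r} : Set E3) (show p ∈ _ by simp)
    have hq' := subset_convexHull ℝ ({p, q, r} : Set E3) (show q ∈ _ by simp)
    have hr' := subset_convexHull ℝ ({p, q, r} : Set E3) (show r ∈ _ by simp)
    have := hc.sum_mem (t := Finset.univ) (w := ![α, β, γ]) (z := ![p, q, r])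
      (by intro i _; fin_cases i <;> simpa) (by simp [Fin.sum_univ_three, h4])
      (by intro i _; fin_cases i <;> simpa)
    simpa [Fin.sum_univ_three] using this
  have hsub : convexHull ℝ {p, q, r} ⊆ P := by
    apply convexHull_min _ hP
    rintro y (rfl | rfl | rfl) <;> assumption
  have h6 := inter_extremePoints_subset_extremePoints_of_subset (𝕜 := ℝ) hsub ⟨hmem, hx'⟩
  have := extremePoints_convexHull_subset h6
  simpa using this

/-- A facet with a triangle of edges has at most three neighbours. -/
theorem triangle_card {P : Set E3} (hS : IsSimplePolytope3 P) {G A B C : Set E3}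
    (hG : IsFacetOf G P) (hA : IsFacetOf A P) (hB : IsFacetOf B P) (hC : IsFacetOf C P)
    (hAB : A ≠ B) (hBC : B ≠ C) (hCA : C ≠ A) (hGA : G ≠ A) (hGB : G ≠ B) (hGC : G ≠ C)
    {p q r : E3} (hp : IsVertexOf p P) (hq : IsVertexOf q P) (hr : IsVertexOf r P)
    (pG : p ∈ G) (pA : p ∈ A) (pB : p ∈ B) (qG : q ∈ G) (qB : q ∈ B) (qC : q ∈ C)
    (rG : r ∈ G) (rC : r ∈ C) (rA : r ∈ A) : (nbrs P G).ncard ≤ 3 := by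
  have pat : ∀ X, IsFacetOf X P → p ∈ X → X = G ∨ X = A ∨ X = B := fun X hX h =>
    facets_at_vertex hS hp hG hA hB hGA hGB hAB pG pA pB hX h
  have qat : ∀ X, IsFacetOf X P → q ∈ X → X = G ∨ X = B ∨ X = C := fun X hX h =>
    facets_at_vertex hS hq hG hB hC hGB hGC hBC qG qB qC hX h
  have rat : ∀ X, IsFacetOf X P → r ∈ X → X = G ∨ X = C ∨ X = A := fun X hX h =>
    facets_at_vertex hS hr hG hC hA hGC hGA hCA rG rC rA hX h
  have pC : p ∉ C := fun h => by rcases pat C hC h with h | h | h <;> simp_all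
  have qA : q ∉ A := fun h => by rcases qat A hA h with h | h | h <;> simp_all
  have rB : r ∉ B := fun h => by rcases rat B hB h with h | h | h <;> simp_all
  obtain ⟨f, c, hf⟩ := facet_supp (polytope_convex hS.1) hG
  have hvert : ∀ x, IsVertexOf x P → x ∈ G → x = p ∨ x = q ∨ x = r := by
    intro x hx xG
    obtain ⟨α, β, γ, h1, h2, h3, h4, h5⟩ := section_subset hS.1 hA hB hC pA pB pC qB qC qA rC rA rB
      hf.1 (((hf.2.2 _).1 pG).2) (((hf.2.2 _).1 qG).2) (((hf.2.2 _).1 rG).2)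
      (((hf.2.2 _).1 xG).1) (((hf.2.2 _).1 xG).2)
    exact vertex_of_comb (polytope_convex hS.1) (isVertexOf_iff.1 hp).1 (isVertexOf_iff.1 hq).1
      (isVertexOf_iff.1 hr).1 hx h1 h2 h3 h4 h5
  have hsub : nbrs P G ⊆ {A, B, C} := by
    rintro X ⟨hX, hXG, hne⟩
    obtain ⟨x, hx, xG, xX⟩ := inter_has_vertex hS hG hX hne
    simp only [mem_insert_iff, mem_singleton_iff]
    rcases hvert x hx xG with rfl | rfl | rfl
    · have := pat X hX xX; tauto
    · have := qat X hX xX; tauto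
    · have := rat X hX xX; tauto
  refine (ncard_le_ncard hsub (by simp)).trans ?_
  exact (ncard_insert_le _ _).trans (by
    have := ncard_insert_le B {C}
    simp at this ⊢
    omega)

open Set Filter Topology

/-- Three pairwise adjacent facets without a common point. -/
structure Belt3 (P A B C : Set E3) : Prop where
  hA : IsFacetOf A P
  hB : IsFacetOf B P
  hC : IsFacetOf C P
  hAB : A ≠ B
  hBC : B ≠ C
  hCA : C ≠ A
  nAB : (A ∩ B).Nonempty
  nBC : (B ∩ C).Nonempty
  nCA : (C ∩ A).Nonempty
  emp : ∀ x, x ∈ A → x ∈ B → x ∈ C → False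

/-- `G, H` are two of the three sets `A, B, C`. -/
def IsPair (A B C G H : Set E3) : Prop :=
  (G = A ∧ H = B) ∨ (G = B ∧ H = A) ∨ (G = B ∧ H = C) ∨ (G = C ∧ H = B) ∨ (G = C ∧ H = A) ∨
    (G = A ∧ H = C)

/-- The plane `f = c` separates `P` along the 3-belt `A, B, C`. -/
structure PSep (P A B C : Set E3) (f : E3 →L[ℝ] ℝ) (c : ℝ) : Prop where
  ne : ∀ v, IsVertexOf v P → f v ≠ c
  cross : ∀ G H, IsFacetOf G P → IsFacetOf H P → G ≠ H → ∀ v w, IsVertexOf v P → IsVertexOf w P →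
    v ∈ G → v ∈ H → w ∈ G → w ∈ H → c < f v → f w < c → IsPair A B C G H
  top : ∀ G H, IsPair A B C G H → ∃ v, IsVertexOf v P ∧ v ∈ G ∧ v ∈ H ∧ c < f v
  bot : ∀ G H, IsPair A B C G H → ∃ v, IsVertexOf v P ∧ v ∈ G ∧ v ∈ H ∧ f v < c
  side : ∀ (h : E3 →L[ℝ] ℝ) (r : ℝ),
    (∀ G H, IsPair A B C G H → (∀ v, IsVertexOf v P → v ∈ G → v ∈ H → r ≤ h v) ∧
      ∃ v, IsVertexOf v P ∧ v ∈ G ∧ v ∈ H ∧ r < h v) →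
    (∀ x ∈ P, h x ≤ r → f x < c) ∨ (∀ x ∈ P, h x ≤ r → c < f x)

theorem IsPair.rot {A B C G H : Set E3} (h : IsPair A B C G H) : IsPair B C A G H := by
  unfold IsPair at *; tauto

theorem IsPair.swap {A B C G H : Set E3} (h : IsPair A B C G H) : IsPair B A C G H := by
  unfold IsPair at *; tauto

theorem Belt3.rot {P A B C : Set E3} (h : Belt3 P A B C) : Belt3 P B C A :=
  ⟨h.hB, h.hC, h.hA, h.hBC, h.hCA, h.hAB, h.nBC, h.nCA, h.nAB, fun x a b c => h.emp x c a b⟩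

theorem Belt3.swap {P A B C : Set E3} (h : Belt3 P A B C) : Belt3 P B A C :=
  ⟨h.hB, h.hA, h.hC, h.hAB.symm, h.hCA.symm, h.hBC.symm, inter_comm A B ▸ h.nAB,
    inter_comm C A ▸ h.nCA, inter_comm B C ▸ h.nBC, fun x a b c => h.emp x b a c⟩

theorem PSep.rot {P A B C : Set E3} {f : E3 →L[ℝ] ℝ} {c : ℝ} (h : PSep P A B C f c) :
    PSep P B C A f c :=
  ⟨h.ne, fun G H a b d v w e f g i j k l m => (h.cross G H a b d v w e f g i j k l m).rot,
    fun G H k => h.top G H k.rot.rot, fun G H k => h.bot G H k.rot.rot,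
    fun l r k => h.side l r fun G H i => k G H i.rot⟩

theorem PSep.swap {P A B C : Set E3} {f : E3 →L[ℝ] ℝ} {c : ℝ} (h : PSep P A B C f c) :
    PSep P B A C f c :=
  ⟨h.ne, fun G H a b d v w e f g i j k l m => (h.cross G H a b d v w e f g i j k l m).swap,
    fun G H k => h.top G H k.swap, fun G H k => h.bot G H k.swap,
    fun l r k => h.side l r fun G H i => k G H i.swap⟩

theorem IsPair.symm {A B C G H : Set E3} (h : IsPair A B C G H) : IsPair A B C H G := by
  unfold IsPair at *; tauto

theorem PSep.flip {P A B C : Set E3} {f : E3 →L[ℝ] ℝ} {c : ℝ} (h : PSep P A B C f c) :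
    PSep P A B C (-f) (-c) := by
  refine ⟨fun v hv => by simpa using h.ne v hv, ?_, ?_, ?_, ?_⟩
  · intro G H hG hH hne v w hv hw vG vH wG wH h1 h2
    exact h.cross G H hG hH hne w v hw hv wG wH vG vH (by simpa using h2) (by simpa using h1)
  · intro G H k
    obtain ⟨v, a, b, d, e⟩ := h.bot G H k
    exact ⟨v, a, b, d, by simpa using e⟩
  · intro G H k
    obtain ⟨v, a, b, d, e⟩ := h.top G H k
    exact ⟨v, a, b, d, by simpa using e⟩
  · intro l r k
    rcases h.side l r k with h1 | h1
    · right; intro x hx hl; simpa using h1 x hx hl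
    · left; intro x hx hl; simpa using h1 x hx hl

theorem comb_mem_facet {P G : Set E3} (hP : Convex ℝ P) (hG : IsFacetOf G P) {p q r x : E3}
    (hp : p ∈ P) (hq : q ∈ P) (hr : r ∈ P) {α β γ : ℝ} (h1 : 0 ≤ α) (h2 : 0 ≤ β) (h3 : 0 ≤ γ)
    (h4 : α + β + γ = 1) (h5 : x = α • p + β • q + γ • r) (hx : x ∈ G) :
    (0 < α → p ∈ G) ∧ (0 < β → q ∈ G) ∧ (0 < γ → r ∈ G) := by
  obtain ⟨u, b, hu0, hle, hmem⟩ := facet_supp hP hG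
  have hxb := ((hmem x).1 hx).2
  rw [h5] at hxb
  simp only [map_add, map_smul, smul_eq_mul] at hxb
  have a1 := mul_nonneg h1 (sub_nonneg.2 (hle p hp))
  have a2 := mul_nonneg h2 (sub_nonneg.2 (hle q hq))
  have a3 := mul_nonneg h3 (sub_nonneg.2 (hle r hr))
  have hs : α * (b - u p) + β * (b - u q) + γ * (b - u r) = 0 := by
    have : γ = 1 - α - β := by linarith
    subst this; linarith
  have aux : ∀ s y : ℝ, 0 < s → s * y = 0 → y = 0 := fun s y hs h =>
    (mul_eq_zero.1 h).resolve_left hs.ne'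
  refine ⟨fun h => (hmem p).2 ⟨hp, ?_⟩, fun h => (hmem q).2 ⟨hq, ?_⟩, fun h => (hmem r).2 ⟨hr, ?_⟩⟩
  · linarith [aux α (b - u p) h (by linarith)]
  · linarith [aux β (b - u q) h (by linarith)]
  · linarith [aux γ (b - u r) h (by linarith)]

/-- Midpoint of the edge `A ∩ B`. -/
theorem edge_mid {P A B C : Set E3} (hS : IsSimplePolytope3 P) (hA : IsFacetOf A P)
    (hB : IsFacetOf B P) (hAB : A ≠ B) (nAB : (A ∩ B).Nonempty)
    (emp : ∀ x, x ∈ A → x ∈ B → x ∈ C → False) :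
    ∃ p v w, p ∈ A ∧ p ∈ B ∧ p ∉ C ∧ v ≠ w ∧ IsVertexOf v P ∧ IsVertexOf w P ∧
      v ∈ A ∧ v ∈ B ∧ w ∈ A ∧ w ∈ B ∧
      (∀ f : E3 →L[ℝ] ℝ, 2 * f p = f v + f w) ∧ p ∈ openSegment ℝ v w ∧ ¬ IsVertexOf p P ∧
      (∀ x, IsVertexOf x P → x ∈ A → x ∈ B → x = v ∨ x = w) ∧
      ∀ G, IsFacetOf G P → p ∈ G → G = A ∨ G = B := by
  obtain ⟨v, hv, vA, vB⟩ := inter_has_vertex hS hA hB nAB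
  obtain ⟨w, hwv, hw, wA, wB, hall⟩ := inter_two hS hv hA hB hAB vA vB
  have hseg : (1/2 : ℝ) • v + (1/2 : ℝ) • w ∈ openSegment ℝ v w :=
    ⟨1/2, 1/2, by norm_num, by norm_num, by norm_num, rfl⟩
  have pA : (1/2 : ℝ) • v + (1/2 : ℝ) • w ∈ A :=
    hA.1.2.2.1 vA wA (by norm_num) (by norm_num) (by norm_num)
  have pB : (1/2 : ℝ) • v + (1/2 : ℝ) • w ∈ B :=
    hB.1.2.2.1 vB wB (by norm_num) (by norm_num) (by norm_num)
  have vP := face_subset hA vA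
  have wP := face_subset hA wA
  refine ⟨(1/2 : ℝ) • v + (1/2 : ℝ) • w, v, w, pA, pB, fun h => emp _ pA pB h, hwv.symm, hv, hw, vA,
    vB, wA, wB, ?_, hseg, ?_, hall, ?_⟩
  · intro f
    simp only [map_add, map_smul, smul_eq_mul]
    ring
  · intro hp
    have h1 := (isVertexOf_iff.1 hp).2 vP wP hseg
    have h2 := (isVertexOf_iff.1 hp).2 wP vP (by rw [openSegment_symm]; exact hseg)
    exact hwv (h2.trans h1.symm)
  · intro G hG pG
    by_contra hcon
    push Not at hcon
    have vG := hG.1.2.2.2.left_mem_of_mem_openSegment vP wP pG hseg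
    have wG := hG.1.2.2.2.right_mem_of_mem_openSegment vP wP pG hseg
    exact hwv (vertex_unique hS hv hA hB hG hAB hcon.1.symm hcon.2.symm vA vB vG wA wB wG)

theorem exists_level {f : E3 →L[ℝ] ℝ} {c : ℝ} {x y : E3} (hx : c ≤ f x) (hy : f y ≤ c) :
    ∃ s t : ℝ, 0 ≤ s ∧ 0 ≤ t ∧ s + t = 1 ∧ f (s • x + t • y) = c := by
  by_cases h : f x = f y
  · refine ⟨1, 0, by norm_num, by norm_num, by norm_num, ?_⟩
    simp; linarith
  · have h0 : 0 < f x - f y := lt_of_le_of_ne (by linarith) (fun h' => h (by linarith))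
    refine ⟨(c - f y)/(f x - f y), (f x - c)/(f x - f y), div_nonneg (by linarith) h0.le,
      div_nonneg (by linarith) h0.le, ?_, ?_⟩
    · rw [← add_div]; rw [div_eq_one_iff_eq h0.ne']; ring
    · simp only [map_add, map_smul, smul_eq_mul]
      rw [div_mul_eq_mul_div, div_mul_eq_mul_div, ← add_div, div_eq_iff h0.ne']
      ring

theorem pair_of {X Y G H : Set E3} (h1 : G = X ∨ G = Y) (h2 : H = X ∨ H = Y) (h : G ≠ H) :
    (G = X ∧ H = Y) ∨ (G = Y ∧ H = X) := by
  rcases h1 with h1 | h1 <;> rcases h2 with h2 | h2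
  · exact absurd (h1.trans h2.symm) h
  · exact Or.inl ⟨h1, h2⟩
  · exact Or.inr ⟨h1, h2⟩
  · exact absurd (h1.trans h2.symm) h

set_option maxHeartbeats 1000000 in
theorem exists_sep {P A B C : Set E3} (hS : IsSimplePolytope3 P) (hb : Belt3 P A B C) :
    ∃ f c, PSep P A B C f c := by
  have hcv := polytope_convex hS.1
  obtain ⟨p, v₁, w₁, pA, pB, pC, hvw₁, hv₁, hw₁, vA₁, vB₁, wA₁, wB₁, hp, hps, hpv, pall, pat⟩ :=
    edge_mid hS hb.hA hb.hB hb.hAB hb.nAB hb.emp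
  obtain ⟨q, v₂, w₂, qB, qC, qA, hvw₂, hv₂, hw₂, vB₂, vC₂, wB₂, wC₂, hq, hqs, hqv, qall, qat⟩ :=
    edge_mid hS hb.hB hb.hC hb.hBC hb.nBC hb.rot.emp
  obtain ⟨r, v₃, w₃, rC, rA, rB, hvw₃, hv₃, hw₃, vC₃, vA₃, wC₃, wA₃, hr, hrs, hrv, rall, rat⟩ :=
    edge_mid hS hb.hC hb.hA hb.hCA hb.nCA hb.rot.rot.emp
  obtain ⟨f, hf0, hf⟩ := exists_clm_of_finrank_lt (W := Submodule.span ℝ {p - r, q - r}) (by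
    have h1 := finrank_span_finset_le_card (R := ℝ) ({p - r, q - r} : Finset E3)
    have h2 : ({p - r, q - r} : Finset E3).card ≤ 2 := Finset.card_le_two
    have h3 : (({p - r, q - r} : Finset E3) : Set E3) = {p - r, q - r} := by ext y; simp
    rw [h3] at h1
    unfold Set.finrank at h1
    omega)
  have fp : f p = f r := by
    have := hf (p - r) (Submodule.subset_span (by simp))
    simp at this; linarith
  have fq : f q = f r := by
    have := hf (q - r) (Submodule.subset_span (by simp))
    simp at this; linarith
  have pP := face_subset hb.hA pA
  have qP := face_subset hb.hB qB
  have rP := face_subset hb.hC rC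
  have hsec : ∀ x ∈ P, f x = f r → ∃ α β γ : ℝ, 0 ≤ α ∧ 0 ≤ β ∧ 0 ≤ γ ∧ α + β + γ = 1 ∧
      x = α • p + β • q + γ • r := fun x hx fx =>
    section_subset hS.1 hb.hA hb.hB hb.hC pA pB pC qB qC qA rC rA rB hf0 fp fq rfl hx fx
  have hne : ∀ v, IsVertexOf v P → f v ≠ f r := by
    intro v hv hfv
    obtain ⟨α, β, γ, h1, h2, h3, h4, h5⟩ := hsec v (isVertexOf_iff.1 hv).1 hfv
    rcases vertex_of_comb hcv pP qP rP hv h1 h2 h3 h4 h5 with rfl | rfl | rfl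
    exacts [hpv hv, hqv hv, hrv hv]
  have split : ∀ {p v w : E3} {X Y : Set E3}, IsVertexOf v P → IsVertexOf w P →
      2 * f p = f v + f w → f p = f r → v ∈ X → v ∈ Y → w ∈ X → w ∈ Y →
      (∃ v, IsVertexOf v P ∧ v ∈ X ∧ v ∈ Y ∧ f r < f v) ∧
      (∃ v, IsVertexOf v P ∧ v ∈ X ∧ v ∈ Y ∧ f v < f r) := by
    intro p v w X Y hv hw h1 h2 a b c d
    rcases lt_or_gt_of_ne (hne v hv) with h | h
    · exact ⟨⟨w, hw, c, d, by linarith⟩, ⟨v, hv, a, b, h⟩⟩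
    · exact ⟨⟨v, hv, a, b, h⟩, ⟨w, hw, c, d, by linarith⟩⟩
  have both : ∀ G H, IsPair A B C G H →
      (∃ v, IsVertexOf v P ∧ v ∈ G ∧ v ∈ H ∧ f r < f v) ∧
      (∃ v, IsVertexOf v P ∧ v ∈ G ∧ v ∈ H ∧ f v < f r) := by
    rintro G H (⟨rfl, rfl⟩ | ⟨rfl, rfl⟩ | ⟨rfl, rfl⟩ | ⟨rfl, rfl⟩ | ⟨rfl, rfl⟩ | ⟨rfl, rfl⟩)
    · exact split hv₁ hw₁ (hp f) fp vA₁ vB₁ wA₁ wB₁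
    · exact split hv₁ hw₁ (hp f) fp vB₁ vA₁ wB₁ wA₁
    · exact split hv₂ hw₂ (hq f) fq vB₂ vC₂ wB₂ wC₂
    · exact split hv₂ hw₂ (hq f) fq vC₂ vB₂ wC₂ wB₂
    · exact split hv₃ hw₃ (hr f) rfl vC₃ vA₃ wC₃ wA₃
    · exact split hv₃ hw₃ (hr f) rfl vA₃ vC₃ wA₃ wC₃
  refine ⟨f, f r, hne, ?_, fun G H h => (both G H h).1, fun G H h => (both G H h).2, ?_⟩
  · intro G H hG hH hGH v w hv hw vG vH wG wH h1 h2
    obtain ⟨s, t, hs, ht, hst, hx⟩ := exists_level h1.le h2.le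
    have xG := hG.1.2.2.1 vG wG hs ht hst
    have xH := hH.1.2.2.1 vH wH hs ht hst
    obtain ⟨α, β, γ, a1, a2, a3, a4, a5⟩ := hsec _ (face_subset hG xG) hx
    have kG := comb_mem_facet hcv hG pP qP rP a1 a2 a3 a4 a5 xG
    have kH := comb_mem_facet hcv hH pP qP rP a1 a2 a3 a4 a5 xH
    unfold IsPair
    have hcase : 0 < α ∨ 0 < β ∨ 0 < γ := by
      by_contra hcon
      push Not at hcon
      linarith [hcon.1, hcon.2.1, hcon.2.2]
    rcases hcase with h | h | h
    · have e1 := pat G hG (kG.1 h)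
      have e2 := pat H hH (kH.1 h)
      exact (pair_of e1 e2 hGH).elim Or.inl fun k => Or.inr (Or.inl k)
    · have e1 := qat G hG (kG.2.1 h)
      have e2 := qat H hH (kH.2.1 h)
      exact (pair_of e1 e2 hGH).elim (fun k => Or.inr (Or.inr (Or.inl k)))
        fun k => Or.inr (Or.inr (Or.inr (Or.inl k)))
    · have e1 := rat G hG (kG.2.2 h)
      have e2 := rat H hH (kH.2.2 h)
      exact (pair_of e1 e2 hGH).elim (fun k => Or.inr (Or.inr (Or.inr (Or.inr (Or.inl k)))))
        fun k => Or.inr (Or.inr (Or.inr (Or.inr (Or.inr k))))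
  · intro h ρ hyp
    have mid : ∀ {p v w : E3} {X Y : Set E3}, IsPair A B C X Y → IsVertexOf v P → IsVertexOf w P →
        v ∈ X → v ∈ Y → w ∈ X → w ∈ Y → 2 * h p = h v + h w →
        (∀ x, IsVertexOf x P → x ∈ X → x ∈ Y → x = v ∨ x = w) → ρ < h p := by
      intro p v w X Y hXY hv hw a b c d e hall
      obtain ⟨k1, x, hx, xX, xY, hlt⟩ := hyp X Y hXY
      have l1 := k1 v hv a b
      have l2 := k1 w hw c d
      rcases hall x hx xX xY with rfl | rfl <;> linarith
    have m1 : ρ < h p := mid (Or.inl ⟨rfl, rfl⟩) hv₁ hw₁ vA₁ vB₁ wA₁ wB₁ (hp h) pall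
    have m2 : ρ < h q := mid (by unfold IsPair; tauto) hv₂ hw₂ vB₂ vC₂ wB₂ wC₂ (hq h) qall
    have m3 : ρ < h r := mid (by unfold IsPair; tauto) hv₃ hw₃ vC₃ vA₃ wC₃ wA₃ (hr h) rall
    by_contra hcon
    push Not at hcon
    obtain ⟨⟨x, xP, hx1, hx2⟩, ⟨y, yP, hy1, hy2⟩⟩ := hcon
    obtain ⟨s, t, hs, ht, hst, hz⟩ := exists_level hx2 hy2
    obtain ⟨α, β, γ, a1, a2, a3, a4, a5⟩ := hsec _ (hcv xP yP hs ht hst) hz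
    have e1 : h (s • x + t • y) ≤ ρ := by
      simp only [map_add, map_smul, smul_eq_mul]
      have : t = 1 - s := by linarith
      subst this
      nlinarith
    have e2 : ρ < h (s • x + t • y) := by
      rw [a5]
      simp only [map_add, map_smul, smul_eq_mul]
      have b1 := mul_nonneg a1 (sub_nonneg.2 m1.le)
      have b2 := mul_nonneg a2 (sub_nonneg.2 m2.le)
      have b3 := mul_nonneg a3 (sub_nonneg.2 m3.le)
      have hcase : 0 < α ∨ 0 < β ∨ 0 < γ := by
        by_contra hcon
        push Not at hcon
        linarith [hcon.1, hcon.2.1, hcon.2.2]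
      have hγ : γ = 1 - α - β := by linarith
      rcases hcase with h | h | h
      · have := mul_pos h (sub_pos.2 m1); subst hγ; nlinarith
      · have := mul_pos h (sub_pos.2 m2); subst hγ; nlinarith
      · have := mul_pos h (sub_pos.2 m3); subst hγ; nlinarith
    linarith

open Set Filter Topology

/-- Three distinct facets sharing a vertex. -/
structure Tri (P A B C : Set E3) : Prop where
  h1 : IsFacetOf A P
  h2 : IsFacetOf B P
  h3 : IsFacetOf C P
  n12 : A ≠ B
  n23 : B ≠ C
  n13 : A ≠ C
  ex : ∃ v, IsVertexOf v P ∧ v ∈ A ∧ v ∈ B ∧ v ∈ C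

theorem Tri.rot {P A B C : Set E3} (h : Tri P A B C) : Tri P B C A :=
  ⟨h.h2, h.h3, h.h1, h.n23, h.n13.symm, h.n12.symm,
    let ⟨v, a, b, c, d⟩ := h.ex; ⟨v, a, c, d, b⟩⟩

theorem Tri.swap {P A B C : Set E3} (h : Tri P A B C) : Tri P B A C :=
  ⟨h.h2, h.h1, h.h3, h.n12.symm, h.n13, h.n23,
    let ⟨v, a, b, c, d⟩ := h.ex; ⟨v, a, c, b, d⟩⟩

theorem Tri.swap' {P A B C : Set E3} (h : Tri P A B C) : Tri P A C B := h.rot.swap.rot.rot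

theorem Tri.nbr {P A B C : Set E3} (h : Tri P A B C) : B ∈ nbrs P A :=
  ⟨h.h2, h.n12.symm, let ⟨v, _, b, c, _⟩ := h.ex; ⟨v, b, c⟩⟩

theorem nbrs_finite {P : Set E3} (hS : IsSimplePolytope3 P) (F : Set E3) : (nbrs P F).Finite :=
  (facets_finite hS.1).subset fun _ h => h.1

theorem nbr_two {P F H : Set E3} (hS : IsSimplePolytope3 P) (hF : IsFacetOf F P)
    (hH : H ∈ nbrs P F) : ∃ K L, K ≠ L ∧ Tri P F H K ∧ Tri P F H L ∧
      ∀ M, Tri P F H M → M = K ∨ M = L := by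
  obtain ⟨hH1, hne, hn⟩ := hH
  obtain ⟨v, hv, vF, vH⟩ := inter_has_vertex hS hF hH1 hn
  obtain ⟨w, hwv, hw, wF, wH, hall⟩ := inter_two hS hv hF hH1 hne.symm vF vH
  obtain ⟨K, hK, KF, KH, vK⟩ := exists_third hS hv (F := F) (G := H)
  obtain ⟨L, hL, LF, LH, wL⟩ := exists_third hS hw (F := F) (G := H)
  refine ⟨K, L, ?_, ⟨hF, hH1, hK, hne.symm, KH.symm, KF.symm, v, hv, vF, vH, vK⟩,
    ⟨hF, hH1, hL, hne.symm, LH.symm, LF.symm, w, hw, wF, wH, wL⟩, ?_⟩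
  · rintro rfl
    exact hwv (vertex_unique hS hv hF hH1 hK hne.symm KF.symm KH.symm vF vH vK wF wH wL)
  · intro M hM
    obtain ⟨x, hx, xF, xH, xM⟩ := hM.ex
    rcases hall x hx xF xH with rfl | rfl
    · left
      rcases facets_at_vertex hS hx hF hH1 hK hne.symm KF.symm KH.symm vF vH vK hM.h3 xM with h | h | h
      exacts [absurd h.symm hM.n13, absurd h.symm hM.n23, h]
    · right
      rcases facets_at_vertex hS hx hF hH1 hL hne.symm LF.symm LH.symm wF wH wL hM.h3 xM with h | h | h
      exacts [absurd h.symm hM.n13, absurd h.symm hM.n23, h]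

theorem tri_of_nonempty {P A B C : Set E3} (hA : IsFacetOf A P)
    (hB : IsFacetOf B P) (hC : IsFacetOf C P) (hAB : A ≠ B) (hBC : B ≠ C) (hAC : A ≠ C)
    (hS : IsSimplePolytope3 P)
    (h : ∃ x, x ∈ A ∧ x ∈ B ∧ x ∈ C) : Tri P A B C := by
  obtain ⟨x, a, b, c⟩ := h
  have h' := face_inter hA hB ⟨x, a, b⟩
  have hf : IsFaceOf (A ∩ B ∩ C) P := ⟨⟨x, ⟨a, b⟩, c⟩, h'.2.1.inter hC.1.2.1,
    h'.2.2.1.inter hC.1.2.2.1, h'.2.2.2.inter hC.1.2.2.2⟩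
  obtain ⟨v, hv, h⟩ := face_has_vertex hS.1 hf
  exact ⟨hA, hB, hC, hAB, hBC, hAC, v, hv, h.1.1, h.1.2, h.2⟩

theorem tri_contra {P G A B C : Set E3} (hS : IsSimplePolytope3 P)
    (hd : ∀ F, IsFacetOf F P → (nbrs P F).ncard = 5 ∨ (nbrs P F).ncard = 6)
    (h1 : Tri P G A B) (h2 : Tri P G B C) (h3 : Tri P G C A) : False := by
  obtain ⟨p, hp, pG, pA, pB⟩ := h1.ex
  obtain ⟨q, hq, qG, qB, qC⟩ := h2.ex
  obtain ⟨r, hr, rG, rC, rA⟩ := h3.ex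
  have := triangle_card hS h1.h1 h1.h2 h1.h3 h2.h3 h1.n23 h2.n23 h3.n23 h1.n12 h1.n13 h2.n13
    hp hq hr pG pA pB qG qB qC rG rC rA
  rcases hd G h1.h1 with h | h <;> omega

theorem ncard_add_le {α : Type*} {S D N : Set α} (hN : N.Finite) (hS : S ⊆ N) (hD : D ⊆ N)
    (hdis : ∀ x, x ∈ S → x ∈ D → False) : S.ncard + D.ncard ≤ N.ncard := by
  rw [← ncard_union_eq (Set.disjoint_left.2 fun x a b => hdis x a b) (hN.subset hS) (hN.subset hD)]
  exact ncard_le_ncard (union_subset hS hD) hN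

theorem quad_contra {P G A B C D : Set E3} (hS : IsSimplePolytope3 P)
    (hd : ∀ F, IsFacetOf F P → (nbrs P F).ncard = 5 ∨ (nbrs P F).ncard = 6)
    (h1 : Tri P G A B) (h2 : Tri P G B C) (h3 : Tri P G C D) (h4 : Tri P G D A)
    (hAC : A ≠ C) (hBD : B ≠ D) : False := by
  have key : ∀ {N K L : Set E3}, Tri P G N K → Tri P G N L → K ≠ L → ∀ M, Tri P G N M →
      M = K ∨ M = L := by
    intro N K L a b hKL M hM
    obtain ⟨K', L', _, _, _, hall⟩ := nbr_two hS a.h1 a.nbr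
    have e1 := hall K a
    have e2 := hall L b
    have e3 := hall M hM
    grind
  have kA := key h1 h4.swap' hBD
  have kB := key h2 h1.swap' hAC.symm
  have kC := key h3 h2.swap' hBD.symm
  have kD := key h4 h3.swap' hAC
  have hfin := nbrs_finite hS G
  set R : Set (Set E3) := nbrs P G \ {A, B, C, D} with hR
  have hsub : ({A, B, C, D} : Set (Set E3)) ⊆ nbrs P G := by
    rintro x (rfl | rfl | rfl | rfl)
    exacts [h1.nbr, h2.nbr, h3.nbr, h4.nbr]
  have hcard : ({A, B, C, D} : Set (Set E3)).ncard = 4 := by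
    have e1 := h1.n23
    have e2 := h2.n23
    have e3 := h3.n23
    have e4 := h4.n23.symm
    rw [ncard_insert_of_notMem (by simp [e1, hAC, e4]), ncard_insert_of_notMem (by simp [e2, hBD]),
      ncard_pair e3]
  have hsum := ncard_sdiff_add_ncard_of_subset hsub hfin
  rw [← hR, hcard] at hsum
  have hRfin : R.Finite := hfin.subset sdiff_subset
  have hclosed : ∀ H ∈ R, ∀ K, Tri P G H K → K ∈ R := by
    intro H hH K hK
    refine ⟨hK.swap'.nbr, ?_⟩
    have hH2 := hH.2
    simp only [mem_insert_iff, mem_singleton_iff, not_or] at hH2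
    rintro (rfl | rfl | rfl | rfl)
    · rcases kA H hK.swap' with h | h <;> tauto
    · rcases kB H hK.swap' with h | h <;> tauto
    · rcases kC H hK.swap' with h | h <;> tauto
    · rcases kD H hK.swap' with h | h <;> tauto
  have hne : R.Nonempty := by
    rw [← ncard_pos hRfin]
    rcases hd G h1.h1 with h | h <;> omega
  obtain ⟨H, hH⟩ := hne
  obtain ⟨K, L, hKL, tK, tL, -⟩ := nbr_two hS h1.h1 hH.1
  have h3le : ({H, K, L} : Set (Set E3)).ncard ≤ R.ncard := by
    apply ncard_le_ncard _ hRfin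
    rintro x (rfl | rfl | rfl)
    exacts [hH, hclosed _ hH _ tK, hclosed _ hH _ tL]
  rw [ncard_insert_of_notMem (by simp [tK.n23, tL.n23]), ncard_pair hKL] at h3le
  rcases hd G h1.h1 with h | h <;> omega

/-- Combinatorics of an arc of neighbours. -/
theorem arc_card {α : Type*} {S : Set α} {T : α → α → Prop} (hfin : S.Finite)
    (irr : ∀ a, ¬ T a a) (symm : ∀ a b, T a b → T b a)
    (two : ∀ H ∈ S, ∃ K L, K ≠ L ∧ T H K ∧ T H L ∧ ∀ M, T H M → M = K ∨ M = L)
    {B C X Y : α} (hB : B ∉ S) (hC : C ∉ S) (hBC : B ≠ C) (hX : X ∈ S) (hY : Y ∈ S)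
    (tX : T X B) (tY : T Y C)
    (out : ∀ H ∈ S, ∀ K, T H K → K ∈ S ∨ (K = B ∧ H = X) ∨ (K = C ∧ H = Y)) :
    1 ≤ S.ncard ∧ (S.ncard = 1 → X = Y) ∧ (S.ncard = 2 → X ≠ Y ∧ T X Y) ∧
      (S.ncard = 3 → X ≠ Y ∧ ∃ Z ∈ S, Z ≠ X ∧ Z ≠ Y ∧ T Z X ∧ T Z Y) := by
  have inner : ∀ Z ∈ S, Z ≠ X → Z ≠ Y → ∃ K L, K ≠ L ∧ T Z K ∧ T Z L ∧ K ∈ S ∧ L ∈ S ∧ K ≠ Z ∧ L ≠ Z := by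
    intro Z hZ h1 h2
    obtain ⟨K, L, h, a, b, -⟩ := two Z hZ
    refine ⟨K, L, h, a, b, ?_, ?_, ?_, ?_⟩
    · rcases out Z hZ K a with h | h | h
      exacts [h, absurd h.2 h1, absurd h.2 h2]
    · rcases out Z hZ L b with h | h | h
      exacts [h, absurd h.2 h1, absurd h.2 h2]
    · rintro rfl; exact irr _ a
    · rintro rfl; exact irr _ b
  refine ⟨?_, ?_, ?_, ?_⟩
  · exact (ncard_pos hfin).2 ⟨X, hX⟩
  · intro h
    obtain ⟨a, rfl⟩ := ncard_eq_one.1 h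
    rw [mem_singleton_iff] at hX hY
    rw [hX, hY]
  · intro h
    obtain ⟨a, b, hab, rfl⟩ := ncard_eq_two.1 h
    have hne : X ≠ Y := by
      rintro rfl
      obtain ⟨Z, hZ, hZX⟩ : ∃ Z ∈ ({a, b} : Set α), Z ≠ X := by
        by_cases h : a = X
        · exact ⟨b, by simp, fun h' => hab (h.trans h'.symm)⟩
        · exact ⟨a, by simp, h⟩
      obtain ⟨K, L, h1, h2, h3, h4, h5, h6, h7⟩ := inner Z hZ hZX hZX
      simp only [mem_insert_iff, mem_singleton_iff] at *
      grind
    refine ⟨hne, ?_⟩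
    obtain ⟨K, L, h1, h2, h3, -⟩ := two X hX
    have o1 := out X hX K h2
    have o2 := out X hX L h3
    have i1 : K ≠ X := by rintro rfl; exact irr _ h2
    have i2 : L ≠ X := by rintro rfl; exact irr _ h3
    simp only [mem_insert_iff, mem_singleton_iff] at *
    grind
  · intro h
    obtain ⟨a, b, d, hab, had, hbd, rfl⟩ := ncard_eq_three.1 h
    have hne : X ≠ Y := by
      rintro rfl
      obtain ⟨Z, hZ, W, hW, hZX, hWX, hZW⟩ : ∃ Z ∈ ({a, b, d} : Set α), ∃ W ∈ ({a, b, d} : Set α),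
          Z ≠ X ∧ W ≠ X ∧ Z ≠ W := by
        simp only [mem_insert_iff, mem_singleton_iff] at hX
        rcases hX with rfl | rfl | rfl
        · exact ⟨b, by simp, d, by simp, hab.symm, had.symm, hbd⟩
        · exact ⟨a, by simp, d, by simp, hab, hbd.symm, had⟩
        · exact ⟨a, by simp, b, by simp, had, hbd, hab⟩
      obtain ⟨K, L, h1, h2, h3, h4, h5, h6, h7⟩ := inner Z hZ hZX hZX
      obtain ⟨K', L', h1', h2', h3', h4', h5', h6', h7'⟩ := inner W hW hWX hWX
      have hall : ∀ y ∈ ({a, b, d} : Set α), y = X ∨ y = Z ∨ y = W := by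
        simp only [mem_insert_iff, mem_singleton_iff] at hX hZ hW ⊢
        grind
      have tZ : T Z X := by
        rcases hall K h4 with h | h | h
        · exact h ▸ h2
        · exact absurd h h6
        · rcases hall L h5 with h' | h' | h'
          · exact h' ▸ h3
          · exact absurd h' h7
          · exact absurd (h.trans h'.symm) h1
      obtain ⟨M, N, -, -, -, hMN⟩ := two X hX
      have e1 := hMN B tX
      have e2 := hMN C tY
      have e3 := hMN Z (symm _ _ tZ)
      have f1 : Z ≠ B := by rintro rfl; exact hB hZ
      have f2 : Z ≠ C := by rintro rfl; exact hC hZ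
      grind
    refine ⟨hne, ?_⟩
    obtain ⟨Z, hZ, hZX, hZY⟩ : ∃ Z ∈ ({a, b, d} : Set α), Z ≠ X ∧ Z ≠ Y := by
      simp only [mem_insert_iff, mem_singleton_iff] at hX hY
      by_contra hcon
      push Not at hcon
      have := hcon a (by simp)
      have := hcon b (by simp)
      have := hcon d (by simp)
      grind
    obtain ⟨K, L, h1, h2, h3, h4, h5, h6, h7⟩ := inner Z hZ hZX hZY
    have hall : ∀ y ∈ ({a, b, d} : Set α), y = X ∨ y = Y ∨ y = Z := by
      simp only [mem_insert_iff, mem_singleton_iff] at hX hY hZ ⊢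
      grind
    refine ⟨Z, hZ, hZX, hZY, ?_⟩
    rcases hall K h4 with h | h | h <;> rcases hall L h5 with h' | h' | h'
    · exact absurd (h.trans h'.symm) h1
    · exact ⟨h ▸ h2, h' ▸ h3⟩
    · exact absurd h' h7
    · exact ⟨h' ▸ h3, h ▸ h2⟩
    · exact absurd (h.trans h'.symm) h1
    · exact absurd h' h7
    all_goals exact absurd h h6

open Set Filter Topology

/-- Neighbours of `F` meeting `F` above the level `c`. -/
def topSet (P : Set E3) (f : E3 →L[ℝ] ℝ) (c : ℝ) (F : Set E3) : Set (Set E3) :=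
  {G | G ∈ nbrs P F ∧ ∀ v, IsVertexOf v P → v ∈ F → v ∈ G → c < f v}

/-- All facets are pentagons or hexagons. -/
def Deg56 (P : Set E3) : Prop :=
  ∀ F, IsFacetOf F P → (nbrs P F).ncard = 5 ∨ (nbrs P F).ncard = 6

theorem isPair_left {A B C K : Set E3} (hAB : A ≠ B) (hCA : C ≠ A) (h : IsPair A B C A K) :
    K = B ∨ K = C := by
  unfold IsPair at h
  rcases h with h | h | h | h | h | h
  exacts [Or.inl h.2, absurd h.1 hAB, absurd h.1 hAB, absurd h.1.symm hCA, absurd h.1.symm hCA,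
    Or.inr h.2]

theorem top_step {P A B C H K : Set E3} {f : E3 →L[ℝ] ℝ} {c : ℝ} (hb : Belt3 P A B C)
    (hs : PSep P A B C f c) (h : Tri P A H K) (hH : H ∈ topSet P f c A) :
    K ∈ topSet P f c A ∨ K = B ∨ K = C := by
  obtain ⟨v, hv, vA, vH, vK⟩ := h.ex
  have hvc := hH.2 v hv vA vH
  by_cases hk : ∀ w, IsVertexOf w P → w ∈ A → w ∈ K → c < f w
  · exact Or.inl ⟨h.swap'.nbr, hk⟩
  · right
    push Not at hk
    obtain ⟨w, hw, wA, wK, hle⟩ := hk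
    exact isPair_left hb.hAB hb.hCA (hs.cross A K h.h1 h.h3 h.n13 v w hv hw vA vK wA wK hvc
      (lt_of_le_of_ne hle (hs.ne w hw)))

theorem notMem_topSet {P A B C G H : Set E3} {f : E3 →L[ℝ] ℝ} {c : ℝ}
    (hs : PSep P A B C f c) (hp : IsPair A B C G H) : H ∉ topSet P f c G := by
  intro h
  obtain ⟨v, hv, vG, vH, hlt⟩ := hs.bot G H hp
  have := h.2 v hv vG vH
  linarith

theorem topSet_finite {P : Set E3} (hS : IsSimplePolytope3 P) (f : E3 →L[ℝ] ℝ) (c : ℝ)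
    (F : Set E3) : (topSet P f c F).Finite :=
  (nbrs_finite hS F).subset fun _ h => h.1

theorem top_count {P A B C : Set E3} {f : E3 →L[ℝ] ℝ} {c : ℝ} (hS : IsSimplePolytope3 P)
    (hd : Deg56 P) (hb : Belt3 P A B C)
    (hs : PSep P A B C f c) :
    (topSet P f c A).ncard + (topSet P (-f) (-c) A).ncard ≤ 4 := by
  have hdis : ∀ x, x ∈ topSet P f c A → x ∈ topSet P (-f) (-c) A → False := by
    intro x h1 h2
    obtain ⟨v, hv, vA, vx⟩ := inter_has_vertex hS hb.hA h1.1.1 h1.1.2.2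
    have a := h1.2 v hv vA vx
    have b := h2.2 v hv vA vx
    simp at b
    linarith
  have hfin := nbrs_finite hS A
  have hsub : topSet P f c A ∪ topSet P (-f) (-c) A ⊆ nbrs P A :=
    union_subset (fun _ h => h.1) fun _ h => h.1
  have hBC : ({B, C} : Set (Set E3)) ⊆ nbrs P A := by
    rintro x (rfl | rfl)
    · exact ⟨hb.hB, hb.hAB.symm, hb.nAB⟩
    · exact ⟨hb.hC, hb.hCA, inter_comm x A ▸ hb.nCA⟩
  have pB : IsPair A B C A B := Or.inl ⟨rfl, rfl⟩
  have pC : IsPair A B C A C := by unfold IsPair; tauto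
  have h := ncard_add_le hfin hsub hBC (by
    rintro x hx (rfl | rfl)
    · exact hx.elim (notMem_topSet hs pB) (notMem_topSet hs.flip pB)
    · exact hx.elim (notMem_topSet hs pC) (notMem_topSet hs.flip pC))
  rw [ncard_union_eq (Set.disjoint_left.2 fun x a b => hdis x a b) (topSet_finite hS _ _ _)
    (topSet_finite hS _ _ _), ncard_pair hb.hBC] at h
  rcases hd A hb.hA with h' | h' <;> omega

/-- `X` is the third facet at the top vertex of `A ∩ B`. -/
def Third (P : Set E3) (f : E3 →L[ℝ] ℝ) (c : ℝ) (A B X : Set E3) : Prop :=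
  X ∈ topSet P f c A ∧ X ∈ topSet P f c B ∧ Tri P A B X ∧
    ∀ H, H ∈ topSet P f c A ∨ H ∈ topSet P f c B → Tri P A B H → H = X

theorem Third.symm {P A B X : Set E3} {f : E3 →L[ℝ] ℝ} {c : ℝ} (h : Third P f c A B X) :
    Third P f c B A X :=
  ⟨h.2.1, h.1, h.2.2.1.swap, fun H k t => h.2.2.2 H k.symm t.swap⟩

theorem exists_Third {P A B C : Set E3} {f : E3 →L[ℝ] ℝ} {c : ℝ} (hS : IsSimplePolytope3 P)
    (hb : Belt3 P A B C) (hs : PSep P A B C f c) : ∃ X, Third P f c A B X ∧ X ≠ C := by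
  have pB : IsPair A B C A B := Or.inl ⟨rfl, rfl⟩
  obtain ⟨v, hv, vA, vB, hlt⟩ := hs.top A B pB
  obtain ⟨w, hw, wA, wB, hgt⟩ := hs.bot A B pB
  obtain ⟨X, hX, hXA, hXB, vX⟩ := exists_third hS hv (F := A) (G := B)
  have hXC : X ≠ C := by
    rintro rfl
    exact hb.emp v vA vB vX
  have tX : Tri P A B X := ⟨hb.hA, hb.hB, hX, hb.hAB, hXB.symm, hXA.symm, v, hv, vA, vB, vX⟩
  have mk : ∀ G, IsFacetOf G P → v ∈ G → (G = A ∨ G = B) → X ∈ topSet P f c G := by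
    intro G hG vG hGAB
    have hXG : X ≠ G := by rcases hGAB with rfl | rfl <;> assumption
    refine ⟨⟨hX, hXG, ⟨v, vG, vX⟩⟩, ?_⟩
    intro y hy yG yX
    by_contra hcon
    have hlt' := lt_of_le_of_ne (not_lt.1 hcon) (hs.ne y hy)
    have hp := (hs.cross G X hG hX hXG.symm v y hv hy vG vX yG yX hlt hlt').symm
    unfold IsPair at hp
    rcases hp with h | h | h | h | h | h
    exacts [hXA h.1, hXB h.1, hXB h.1, hXC h.1, hXC h.1, hXA h.1]
  refine ⟨X, ⟨mk A hb.hA vA (Or.inl rfl), mk B hb.hB vB (Or.inr rfl), tX, ?_⟩, hXC⟩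
  intro H hH tH
  obtain ⟨y, hy, yA, yB, yH⟩ := tH.ex
  have hyt : c < f y := by
    rcases hH with h | h
    · exact h.2 y hy yA yH
    · exact h.2 y hy yB yH
  obtain ⟨z, hzv, hz, zA, zB, hall⟩ := inter_two hS hv hb.hA hb.hB hb.hAB vA vB
  have hyv : y = v := by
    rcases hall y hy yA yB with h | h
    · exact h
    · rcases hall w hw wA wB with h' | h'
      · subst h'; linarith
      · subst h; subst h'; linarith
  subst hyv
  rcases facets_at_vertex hS hv hb.hA hb.hB hX hb.hAB hXA.symm hXB.symm vA vB vX tH.h3 yH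
    with h | h | h
  exacts [absurd h.symm tH.n13, absurd h.symm tH.n23, h]

theorem arc_belt {P A B C X Y : Set E3} {f : E3 →L[ℝ] ℝ} {c : ℝ} (hS : IsSimplePolytope3 P)
    (hb : Belt3 P A B C) (hs : PSep P A B C f c) (hX : Third P f c A B X)
    (hY : Third P f c A C Y) :
    1 ≤ (topSet P f c A).ncard ∧ ((topSet P f c A).ncard = 1 → X = Y) ∧
    ((topSet P f c A).ncard = 2 → X ≠ Y ∧ Tri P A X Y) ∧
      ((topSet P f c A).ncard = 3 → X ≠ Y ∧ ∃ Z ∈ topSet P f c A, Z ≠ X ∧ Z ≠ Y ∧ Tri P A Z X ∧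
        Tri P A Z Y) := by
  have pB : IsPair A B C A B := Or.inl ⟨rfl, rfl⟩
  have pC : IsPair A B C A C := by unfold IsPair; tauto
  refine arc_card (T := fun H K => Tri P A H K) (B := B) (C := C) (topSet_finite hS f c A)
    ?_ ?_ ?_ ?_ ?_ ?_ ?_ ?_ ?_ ?_ ?_
  · exact fun a h => h.n23 rfl
  · exact fun a b h => h.swap'
  · exact fun H hH => nbr_two hS hb.hA hH.1
  · exact notMem_topSet hs pB
  · exact notMem_topSet hs pC
  · exact hb.hBC
  · exact hX.1
  · exact hY.1
  · exact hX.2.2.1.swap'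
  · exact hY.2.2.1.swap'
  · intro H hH K hK
    rcases top_step hb hs hK hH with h | rfl | rfl
    · exact Or.inl h
    · exact Or.inr (Or.inl ⟨rfl, hX.2.2.2 H (Or.inl hH) hK.swap'⟩)
    · exact Or.inr (Or.inr ⟨rfl, hY.2.2.2 H (Or.inl hH) hK.swap'⟩)

/-- Number of vertices above the plane. -/
noncomputable def height (P : Set E3) (f : E3 →L[ℝ] ℝ) (c : ℝ) : ℕ := {v | IsVertexOf v P ∧ c < f v}.ncard

theorem new_belt {P A B C X Y Z : Set E3} {f : E3 →L[ℝ] ℝ} {c : ℝ} (hS : IsSimplePolytope3 P)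
    (hd : Deg56 P) (hb : Belt3 P A B C) (hs : PSep P A B C f c) (hn : Belt3 P X Y Z)
    (eXY : ∃ v, IsVertexOf v P ∧ v ∈ X ∧ v ∈ Y ∧ c < f v)
    (eYZ : ∃ v, IsVertexOf v P ∧ v ∈ Y ∧ v ∈ Z ∧ c < f v)
    (eZX : ∃ v, IsVertexOf v P ∧ v ∈ Z ∧ v ∈ X ∧ c < f v)
    (hX : X ∉ ({A, B, C} : Set (Set E3))) (hY : Y ∉ ({A, B, C} : Set (Set E3)))
    (hZ : Z ∉ ({A, B, C} : Set (Set E3))) {D₁ D₂ D₃ : Set (Set E3)}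
    (d₁ : ∀ G ∈ D₁, G ∈ ({A, B, C} : Set (Set E3)) ∧ G ∈ nbrs P X)
    (d₂ : ∀ G ∈ D₂, G ∈ ({A, B, C} : Set (Set E3)) ∧ G ∈ nbrs P Y)
    (d₃ : ∀ G ∈ D₃, G ∈ ({A, B, C} : Set (Set E3)) ∧ G ∈ nbrs P Z)
    (hD : D₁.ncard + D₂.ncard + D₃.ncard = 6) :
    ∃ g e, PSep P X Y Z g e ∧ height P g e < height P f c ∧
      (topSet P g e X).ncard + (topSet P g e Y).ncard + (topSet P g e Z).ncard ≤ 6 := by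
  have hmemABC : ∀ {G H}, IsPair A B C G H → G ∈ ({A, B, C} : Set (Set E3)) := by
    intro G H h
    rcases h with h | h | h | h | h | h <;> simp [h.1]
  have hXYZ : ∀ {G H}, IsPair X Y Z G H → G ∉ ({A, B, C} : Set (Set E3)) ∧ IsFacetOf G P ∧
      IsFacetOf H P ∧ G ≠ H ∧ ∃ v, IsVertexOf v P ∧ v ∈ G ∧ v ∈ H ∧ c < f v := by
    have sw : ∀ {G H : Set E3}, (∃ v, IsVertexOf v P ∧ v ∈ G ∧ v ∈ H ∧ c < f v) →
      ∃ v, IsVertexOf v P ∧ v ∈ H ∧ v ∈ G ∧ c < f v :=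
      fun ⟨v, a, b, d, e⟩ => ⟨v, a, d, b, e⟩
    intro G H h
    rcases h with ⟨rfl, rfl⟩ | ⟨rfl, rfl⟩ | ⟨rfl, rfl⟩ | ⟨rfl, rfl⟩ | ⟨rfl, rfl⟩ | ⟨rfl, rfl⟩
    · exact ⟨hX, hn.hA, hn.hB, hn.hAB, eXY⟩
    · exact ⟨hY, hn.hB, hn.hA, hn.hAB.symm, sw eXY⟩
    · exact ⟨hY, hn.hB, hn.hC, hn.hBC, eYZ⟩
    · exact ⟨hZ, hn.hC, hn.hB, hn.hBC.symm, sw eYZ⟩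
    · exact ⟨hZ, hn.hC, hn.hA, hn.hCA, eZX⟩
    · exact ⟨hX, hn.hA, hn.hC, hn.hCA.symm, sw eZX⟩
  have habove : ∀ G H, IsPair X Y Z G H → ∀ v, IsVertexOf v P → v ∈ G → v ∈ H → c < f v := by
    intro G H hp w hw wG wH
    obtain ⟨h1, h2, h3, h4, v, hv, vG, vH, hlt⟩ := hXYZ hp
    by_contra hcon
    have hlt' := lt_of_le_of_ne (not_lt.1 hcon) (hs.ne w hw)
    exact h1 (hmemABC (hs.cross G H h2 h3 h4 v w hv hw vG vH wG wH hlt hlt'))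
  have hhyp : ∀ G H, IsPair X Y Z G H → (∀ v, IsVertexOf v P → v ∈ G → v ∈ H → c ≤ f v) ∧
      ∃ v, IsVertexOf v P ∧ v ∈ G ∧ v ∈ H ∧ c < f v := fun G H hp =>
    ⟨fun v a b d => (habove G H hp v a b d).le, (hXYZ hp).2.2.2.2⟩
  obtain ⟨g, e, hg, hbot⟩ : ∃ g e, PSep P X Y Z g e ∧ ∀ x ∈ P, f x ≤ c → g x < e := by
    obtain ⟨g, e, hg⟩ := exists_sep hS hn
    rcases hg.side f c hhyp with h | h
    · exact ⟨g, e, hg, h⟩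
    · exact ⟨-g, -e, hg.flip, fun x hx hl => by simpa using h x hx hl⟩
  have hlow : ∀ F, IsFacetOf F P → F ∈ ({A, B, C} : Set (Set E3)) → (∃ v ∈ F, f v < c) →
      ∀ x ∈ F, g x < e := by
    intro F hF hFm ⟨v, vF, hv⟩ x xF
    obtain ⟨u, b, hu0, hle, hmem⟩ := facet_supp (polytope_convex hS.1) hF
    have hsd := hg.side (-u) (-b) (by
      intro G H hp
      obtain ⟨h1, h2, h3, h4, y, hy, yG, yH, -⟩ := hXYZ hp
      have h1' := (hXYZ hp.symm).1
      have hGF : G ≠ F := fun h => h1 (h ▸ hFm)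
      have hHF : H ≠ F := fun h => h1' (h ▸ hFm)
      refine ⟨fun z hz zG zH => ?_, ?_⟩
      · simpa using hle z (face_subset h2 zG)
      · obtain ⟨z, hzy, hz, zG, zH, -⟩ := inter_two hS hy h2 h3 h4 yG yH
        by_contra hcon
        push Not at hcon
        have inF : ∀ t, IsVertexOf t P → t ∈ G → t ∈ H → t ∈ F := by
          intro t ht tG tH
          have k := hcon t ht tG tH
          simp at k
          have tP := face_subset h2 tG
          exact (hmem t).2 ⟨tP, le_antisymm (hle t tP) k⟩
        exact hzy (vertex_unique hS hy h2 h3 hF h4 hGF hHF yG yH (inF y hy yG yH) zG zH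
          (inF z hz zG zH)))
    have hxF := (hmem x).1 xF
    have hvF := (hmem v).1 vF
    rcases hsd with h | h
    · exact h x hxF.1 (by simp [hxF.2])
    · have k1 := h v hvF.1 (by simp [hvF.2])
      have k2 := hbot v hvF.1 hv.le
      linarith
  have pAB : IsPair A B C A B := Or.inl ⟨rfl, rfl⟩
  have pBC : IsPair A B C B C := by unfold IsPair; tauto
  have hlowA : ∀ F ∈ ({A, B, C} : Set (Set E3)), ∀ x ∈ F, g x < e := by
    obtain ⟨v, hv, vA, vB, hlt⟩ := hs.bot A B pAB
    obtain ⟨w, hw, wB, wC, hlt'⟩ := hs.bot B C pBC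
    rintro F (rfl | rfl | rfl)
    · exact hlow F hb.hA (by simp) ⟨v, vA, hlt⟩
    · exact hlow F hb.hB (by simp) ⟨v, vB, hlt⟩
    · exact hlow F hb.hC (by simp) ⟨w, wC, hlt'⟩
  have hcount : ∀ {X Y Z : Set E3} {D : Set (Set E3)}, Belt3 P X Y Z → PSep P X Y Z g e →
      Y ∉ ({A, B, C} : Set (Set E3)) → Z ∉ ({A, B, C} : Set (Set E3)) →
      (∀ G ∈ D, G ∈ ({A, B, C} : Set (Set E3)) ∧ G ∈ nbrs P X) →
      (topSet P g e X).ncard + D.ncard ≤ 4 := by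
    intro X Y Z D hn hg hY hZ hD
    have pXY : IsPair X Y Z X Y := Or.inl ⟨rfl, rfl⟩
    have pXZ : IsPair X Y Z X Z := by unfold IsPair; tauto
    have hdis : ∀ x, x ∈ topSet P g e X → x ∈ D → False := by
      intro x h1 h2
      obtain ⟨v, hv, vX, vx⟩ := inter_has_vertex hS hn.hA h1.1.1 h1.1.2.2
      have a := h1.2 v hv vX vx
      have b := hlowA x (hD x h2).1 v vx
      linarith
    have hfin := nbrs_finite hS X
    have hsub : topSet P g e X ∪ D ⊆ nbrs P X :=
      union_subset (fun _ h => h.1) fun _ h => (hD _ h).2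
    have hYZ : ({Y, Z} : Set (Set E3)) ⊆ nbrs P X := by
      rintro x (rfl | rfl)
      · exact ⟨hn.hB, hn.hAB.symm, hn.nAB⟩
      · exact ⟨hn.hC, hn.hCA, inter_comm x X ▸ hn.nCA⟩
    have h := ncard_add_le hfin hsub hYZ (by
      rintro x hx (rfl | rfl)
      · exact hx.elim (notMem_topSet hg pXY) fun h => hY (hD _ h).1
      · exact hx.elim (notMem_topSet hg pXZ) fun h => hZ (hD _ h).1)
    rw [ncard_union_eq (Set.disjoint_left.2 fun x a b => hdis x a b) (topSet_finite hS _ _ _)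
      (hfin.subset fun _ h => (hD _ h).2), ncard_pair hn.hBC] at h
    rcases hd X hn.hA with h' | h' <;> omega
  refine ⟨g, e, hg, ?_, ?_⟩
  · have hvf : {v | IsVertexOf v P}.Finite := polytope_verts_finite hS.1
    apply ncard_lt_ncard _ (hvf.subset fun _ h => h.1)
    rw [ssubset_iff_exists]
    constructor
    · rintro v ⟨hv, hlt⟩
      refine ⟨hv, ?_⟩
      by_contra hcon
      have := hbot v (isVertexOf_iff.1 hv).1 (not_lt.1 hcon)
      linarith
    · obtain ⟨v, hv, vA, vB, hlt⟩ := hs.top A B pAB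
      refine ⟨v, ⟨hv, hlt⟩, fun h => ?_⟩
      have := hlowA A (by simp) v vA
      have := h.2
      linarith
  · have c1 := hcount hn hg hY hZ d₁
    have c2 := hcount hn.rot hg.rot hZ hX d₂
    have c3 := hcount hn.rot.rot hg.rot.rot hX hY d₃
    omega

open Set Filter Topology

theorem top_vertex {P F G H : Set E3} {f : E3 →L[ℝ] ℝ} {c : ℝ} (h : Tri P F G H)
    (hG : G ∈ topSet P f c F) : ∃ v, IsVertexOf v P ∧ v ∈ G ∧ v ∈ H ∧ c < f v := by
  obtain ⟨v, hv, a, b, d⟩ := h.ex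
  exact ⟨v, hv, b, d, hG.2 v hv a b⟩

theorem two_ones {P A B C : Set E3} {f : E3 →L[ℝ] ℝ} {c : ℝ} (hS : IsSimplePolytope3 P)
    (hd : Deg56 P) (hb : Belt3 P A B C) (hs : PSep P A B C f c)
    (h1 : (topSet P f c A).ncard = 1) (h2 : (topSet P f c B).ncard = 1) : False := by
  obtain ⟨X, hX, -⟩ := exists_Third hS hb hs
  obtain ⟨Z, hZ, -⟩ := exists_Third hS hb.rot hs.rot
  obtain ⟨Y, hY, -⟩ := exists_Third hS hb.rot.rot hs.rot.rot
  have e1 := (arc_belt hS hb hs hX hY.symm).2.1 h1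
  have e2 := (arc_belt hS hb.rot hs.rot hZ hX.symm).2.1 h2
  subst e1
  subst e2
  exact tri_contra hS hd hX.2.2.1.rot.rot hZ.2.2.1.rot.rot hY.2.2.1.rot.rot

theorem two_two_one {P A B C : Set E3} {f : E3 →L[ℝ] ℝ} {c : ℝ} (hS : IsSimplePolytope3 P)
    (hd : Deg56 P) (hb : Belt3 P A B C) (hs : PSep P A B C f c)
    (h1 : (topSet P f c A).ncard = 2) (h2 : (topSet P f c B).ncard = 2)
    (h3 : (topSet P f c C).ncard = 1) : False := by
  obtain ⟨X, hX, -⟩ := exists_Third hS hb hs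
  obtain ⟨Z, hZ, -⟩ := exists_Third hS hb.rot hs.rot
  obtain ⟨Y, hY, -⟩ := exists_Third hS hb.rot.rot hs.rot.rot
  have e1 := (arc_belt hS hb hs hX hY.symm).2.2.1 h1
  have e2 := (arc_belt hS hb.rot hs.rot hZ hX.symm).2.2.1 h2
  have e3 := (arc_belt hS hb.rot.rot hs.rot.rot hY hZ.symm).2.1 h3
  subst e3
  exact tri_contra hS hd hX.2.2.1.rot.rot e2.2.rot.rot e1.2.rot

theorem notMem3 {A B C X : Set E3} (h1 : X ≠ A) (h2 : X ≠ B) (h3 : X ≠ C) :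
    X ∉ ({A, B, C} : Set (Set E3)) := by
  simp [h1, h2, h3]

/-- The descent statement. -/
def Descend (P : Set E3) (f : E3 →L[ℝ] ℝ) (c : ℝ) : Prop :=
  ∃ X Y Z g e, Belt3 P X Y Z ∧ PSep P X Y Z g e ∧ height P g e < height P f c ∧
    (topSet P g e X).ncard + (topSet P g e Y).ncard + (topSet P g e Z).ncard ≤ 6

theorem two_two_two {P A B C : Set E3} {f : E3 →L[ℝ] ℝ} {c : ℝ} (hS : IsSimplePolytope3 P)
    (hd : Deg56 P) (hb : Belt3 P A B C) (hs : PSep P A B C f c)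
    (h1 : (topSet P f c A).ncard = 2) (h2 : (topSet P f c B).ncard = 2)
    (h3 : (topSet P f c C).ncard = 2) : Descend P f c := by
  obtain ⟨X, hX, hXC⟩ := exists_Third hS hb hs
  obtain ⟨Z, hZ, hZA⟩ := exists_Third hS hb.rot hs.rot
  obtain ⟨Y, hY, hYB⟩ := exists_Third hS hb.rot.rot hs.rot.rot
  have e1 := (arc_belt hS hb hs hX hY.symm).2.2.1 h1
  have e2 := (arc_belt hS hb.rot hs.rot hZ hX.symm).2.2.1 h2
  have e3 := (arc_belt hS hb.rot.rot hs.rot.rot hY hZ.symm).2.2.1 h3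
  have tX := hX.2.2.1
  have tY := hY.2.2.1
  have tZ := hZ.2.2.1
  have hemp : ∀ x, x ∈ X → x ∈ Y → x ∈ Z → False := by
    intro x xX xY xZ
    have t : Tri P X Y Z := tri_of_nonempty tX.h3 tY.h3 tZ.h3 e1.1 e3.1 e2.1.symm hS ⟨x, xX, xY, xZ⟩
    exact quad_contra hS hd tX.rot.rot e2.2.rot.rot t.swap' e1.2.rot hZA.symm hYB.symm
  have v1 := top_vertex e1.2 hX.1
  have v2 := top_vertex e2.2 hZ.1
  have v3 := top_vertex e3.2 hY.1
  have hn : Belt3 P X Y Z := by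
    refine ⟨tX.h3, tY.h3, tZ.h3, e1.1, e3.1, e2.1, ?_, ?_, ?_, hemp⟩
    · obtain ⟨v, _, a, b, _⟩ := v1; exact ⟨v, a, b⟩
    · obtain ⟨v, _, a, b, _⟩ := v3; exact ⟨v, a, b⟩
    · obtain ⟨v, _, a, b, _⟩ := v2; exact ⟨v, a, b⟩
  obtain ⟨g, e, r1, r2, r3⟩ := new_belt hS hd hb hs hn v1 v3 v2
    (notMem3 tX.n13.symm tX.n23.symm hXC) (notMem3 tY.n23.symm hYB tY.n13.symm)
    (notMem3 hZA tZ.n13.symm tZ.n23.symm)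
    (D₁ := {A, B}) (D₂ := {C, A}) (D₃ := {B, C})
    (by
      rintro G (rfl | rfl)
      · exact ⟨by simp, tX.rot.rot.nbr⟩
      · exact ⟨by simp, tX.rot.rot.swap'.nbr⟩)
    (by
      rintro G (rfl | rfl)
      · exact ⟨by simp, tY.rot.rot.nbr⟩
      · exact ⟨by simp, tY.rot.rot.swap'.nbr⟩)
    (by
      rintro G (rfl | rfl)
      · exact ⟨by simp, tZ.rot.rot.nbr⟩
      · exact ⟨by simp, tZ.rot.rot.swap'.nbr⟩)
    (by rw [ncard_pair hb.hAB, ncard_pair hb.hCA, ncard_pair hb.hBC])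
  exact ⟨X, Y, Z, g, e, hn, r1, r2, r3⟩

theorem three_two_one {P A B C : Set E3} {f : E3 →L[ℝ] ℝ} {c : ℝ} (hS : IsSimplePolytope3 P)
    (hd : Deg56 P) (hb : Belt3 P A B C) (hs : PSep P A B C f c)
    (h1 : (topSet P f c A).ncard = 3) (h2 : (topSet P f c B).ncard = 2)
    (h3 : (topSet P f c C).ncard = 1) : Descend P f c := by
  obtain ⟨X, hX, hXC⟩ := exists_Third hS hb hs
  obtain ⟨W, hZ, hZA⟩ := exists_Third hS hb.rot hs.rot
  obtain ⟨Y, hY, hYB⟩ := exists_Third hS hb.rot.rot hs.rot.rot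
  obtain ⟨e1, V, hV, hVX, hVY, tVX, tVW⟩ := (arc_belt hS hb hs hX hY.symm).2.2.2 h1
  have e2 := (arc_belt hS hb.rot hs.rot hZ hX.symm).2.2.1 h2
  have e3 := (arc_belt hS hb.rot.rot hs.rot.rot hY hZ.symm).2.1 h3
  subst e3
  have tX := hX.2.2.1
  have tY := hY.2.2.1
  have tZ := hZ.2.2.1
  have hemp : ∀ x, x ∈ X → x ∈ Y → x ∈ V → False := by
    intro x xX xW xV
    have t : Tri P X Y V := tri_of_nonempty tX.h3 tY.h3 tVX.h2 e1 hVY.symm hVX.symm hS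
      ⟨x, xX, xW, xV⟩
    exact tri_contra hS hd tVX.swap t.rot.rot tVW.rot
  have v1 := top_vertex e2.2.swap' hX.2.1
  have v2 := top_vertex tVX hV
  have v3 := top_vertex tVW.swap' hY.2.1
  have hVB : V ≠ B := by
    rintro rfl
    exact notMem_topSet hs (Or.inl ⟨rfl, rfl⟩) hV
  have hVC : V ≠ C := by
    rintro rfl
    exact notMem_topSet hs (by unfold IsPair; tauto) hV
  have hn : Belt3 P X Y V := by
    refine ⟨tX.h3, tY.h3, tVX.h2, e1, hVY.symm, hVX, ?_, ?_, ?_, hemp⟩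
    · obtain ⟨v, _, a, b, _⟩ := v1; exact ⟨v, a, b⟩
    · obtain ⟨v, _, a, b, _⟩ := v3; exact ⟨v, a, b⟩
    · obtain ⟨v, _, a, b, _⟩ := v2; exact ⟨v, a, b⟩
  obtain ⟨g, e, r1, r2, r3⟩ := new_belt hS hd hb hs hn v1 v3 v2
    (notMem3 tX.n13.symm tX.n23.symm hXC) (notMem3 tY.n23.symm hYB tY.n13.symm)
    (notMem3 tVX.n12.symm hVB hVC)
    (D₁ := {A, B}) (D₂ := {A, B, C}) (D₃ := {A})
    (by
      rintro G (rfl | rfl)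
      · exact ⟨by simp, tX.rot.rot.nbr⟩
      · exact ⟨by simp, tX.rot.rot.swap'.nbr⟩)
    (by
      rintro G (rfl | rfl | rfl)
      · exact ⟨by simp, tY.rot.rot.swap'.nbr⟩
      · exact ⟨by simp, tZ.rot.rot.nbr⟩
      · exact ⟨by simp, tY.rot.rot.nbr⟩)
    (by
      rintro G rfl
      exact ⟨by simp, tVX.swap.nbr⟩)
    (by
      rw [ncard_pair hb.hAB, ncard_insert_of_notMem (by simp [hb.hAB, hb.hCA.symm]),
        ncard_pair hb.hBC, ncard_singleton])
  exact ⟨X, Y, V, g, e, hn, r1, r2, r3⟩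

theorem no_belt_aux {P : Set E3} (hS : IsSimplePolytope3 P) (hd : Deg56 P) (n : ℕ) :
    ∀ (A B C : Set E3) (f : E3 →L[ℝ] ℝ) (c : ℝ), Belt3 P A B C → PSep P A B C f c →
      height P f c = n →
      (topSet P f c A).ncard + (topSet P f c B).ncard + (topSet P f c C).ncard ≤ 6 → False := by
  induction n using Nat.strong_induction_on with
  | _ n ih =>
    intro A B C f c hb hs hn hsum
    have desc : Descend P f c → False := by
      rintro ⟨X, Y, Z, g, e, h1, h2, h3, h4⟩
      exact ih _ (hn ▸ h3) X Y Z g e h1 h2 rfl h4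
    have pos : ∀ {A B C : Set E3}, Belt3 P A B C → PSep P A B C f c →
        1 ≤ (topSet P f c A).ncard := by
      intro A B C hb hs
      obtain ⟨X, hX, -⟩ := exists_Third hS hb hs
      obtain ⟨Y, hY, -⟩ := exists_Third hS hb.rot.rot hs.rot.rot
      exact (arc_belt hS hb hs hX hY.symm).1
    have p1 := pos hb hs
    have p2 := pos hb.rot hs.rot
    have p3 := pos hb.rot.rot hs.rot.rot
    have o1 := two_ones hS hd hb hs
    have o2 := two_ones hS hd hb.rot hs.rot
    have o3 := two_ones hS hd hb.rot.rot hs.rot.rot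
    have q1 := two_two_one hS hd hb hs
    have q2 := two_two_one hS hd hb.rot hs.rot
    have q3 := two_two_one hS hd hb.rot.rot hs.rot.rot
    have r1 := fun h1 h2 h3 => desc (two_two_two hS hd hb hs h1 h2 h3)
    have s1 := fun h1 h2 h3 => desc (three_two_one hS hd hb hs h1 h2 h3)
    have s2 := fun h1 h2 h3 => desc (three_two_one hS hd hb.rot hs.rot h1 h2 h3)
    have s3 := fun h1 h2 h3 => desc (three_two_one hS hd hb.rot.rot hs.rot.rot h1 h2 h3)
    have s4 := fun h1 h2 h3 => desc (three_two_one hS hd hb.swap hs.swap h1 h2 h3)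
    have s5 := fun h1 h2 h3 => desc (three_two_one hS hd hb.rot.swap hs.rot.swap h1 h2 h3)
    have s6 := fun h1 h2 h3 => desc (three_two_one hS hd hb.rot.rot.swap hs.rot.rot.swap h1 h2 h3)
    clear desc pos ih
    generalize (topSet P f c A).ncard = a at *
    generalize (topSet P f c B).ncard = b at *
    generalize (topSet P f c C).ncard = d at *
    have ha : a ≤ 4 := by omega
    have hb' : b ≤ 4 := by omega
    have hd' : d ≤ 4 := by omega
    interval_cases a <;> interval_cases b <;> interval_cases d <;>
      first
        | omega
        | exact o1 rfl rfl
        | exact o2 rfl rfl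
        | exact o3 rfl rfl
        | exact q1 rfl rfl rfl
        | exact q2 rfl rfl rfl
        | exact q3 rfl rfl rfl
        | exact r1 rfl rfl rfl
        | exact s1 rfl rfl rfl
        | exact s2 rfl rfl rfl
        | exact s3 rfl rfl rfl
        | exact s4 rfl rfl rfl
        | exact s5 rfl rfl rfl
        | exact s6 rfl rfl rfl

theorem no_belt {P A B C : Set E3} (hS : IsSimplePolytope3 P) (hd : Deg56 P)
    (hb : Belt3 P A B C) : False := by
  obtain ⟨f, c, hs⟩ := exists_sep hS hb
  have c1 := top_count hS hd hb hs
  have c2 := top_count hS hd hb.rot hs.rot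
  have c3 := top_count hS hd hb.rot.rot hs.rot.rot
  by_cases h : (topSet P f c A).ncard + (topSet P f c B).ncard + (topSet P f c C).ncard ≤ 6
  · exact no_belt_aux hS hd _ A B C f c hb hs rfl h
  · exact no_belt_aux hS hd _ A B C (-f) (-c) hb hs.flip rfl (by omega)

theorem deg56 {P : Set E3} (hP : IsFullerene P) : Deg56 P := by
  intro F hF
  rw [← facetEdges_eq hP.1 hF]
  exact hP.2 F hF

theorem belt3_of_belt {P : Set E3} {L : Fin 3 → Set E3} (h : IsBelt P L) :
    Belt3 P (L 0) (L 1) (L 2) := by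
  obtain ⟨-, ⟨-, hf, he⟩, h3, -⟩ := h
  have n0 : nxt (0 : Fin 3) = 1 := rfl
  have n1 : nxt (1 : Fin 3) = 2 := rfl
  have n2 : nxt (2 : Fin 3) = 0 := rfl
  have e0 := he (by norm_num) 0
  have e1 := he (by norm_num) 1
  have e2 := he (by norm_num) 2
  have hem := h3 rfl 0
  rw [n0] at e0 hem
  rw [n1] at e1 hem
  rw [n2] at e2
  have ne : ∀ i j, IsEdgeOf (L i ∩ L j) P → L i ≠ L j := by
    intro i j hij heq
    rw [heq, inter_self] at hij
    have a := hij.2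
    have b := (hf j).2
    omega
  refine ⟨hf 0, hf 1, hf 2, ne _ _ e0, ne _ _ e1, ne _ _ e2, e0.1.1, e1.1.1, e2.1.1, ?_⟩
  intro x a b c
  have : x ∈ L 0 ∩ L 1 ∩ L 2 := ⟨⟨a, b⟩, c⟩
  rw [hem] at this
  exact this

theorem facets_ne_four {P : Set E3} (hP : IsFullerene P) : (facets P).ncard ≠ 4 := by
  intro h4
  have hne : (facets P).Nonempty := by
    exact nonempty_of_ncard_ne_zero (by omega)
  obtain ⟨F, hF⟩ := hne
  have h : (nbrs P F).ncard ≤ (facets P).ncard :=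
    ncard_le_ncard (fun G hG => hG.1) (facets_finite hP.1.1)
  rcases deg56 hP F hF with h' | h' <;> omega

/-- Every fullerene is a flag 3-polytope. -/
theorem fullerene_is_flag (P : Set E3) (hP : IsFullerene P) :
    IsFlag3Polytope P := by
  exact ⟨hP.1, facets_ne_four hP, fun _ hB => no_belt hP.1 (deg56 hP) (belt3_of_belt hB)⟩
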